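/- arXiv:2207.09797 — 4 statements merged into one kernel-verified Lean document; each statement's English description precedes it below -/
import Mathlib

section
/- Let G be a finite graph with edges colored red or blue, let M0 be a perfect matching of G with the minimum number of red edges among all perfect matchings of G, and let k be an integer with r(M0) ≤ k and r(M0) ≢ k (mod 2). Then G contains a perfect matching M with r(M) ≤ k and r(M) ≡ k (mod 2) if and only if G contains an M0-alternating cycle C with w_{M0}(C) odd and w_{M0}(C) ≤ k − r(M0). Moreover, if C is such a cycle, then M0 Δ C is a perfect matching with r(M0 Δ C) ≤ k and r(M0 Δ C) ≡ k (mod 2). -/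
open Finset

/-- `M` is (the edge set of) a perfect matching of `G`: all its edges are edges of `G` and
every vertex belongs to exactly one edge of `M`. -/
def IsPM {V : Type*} [DecidableEq V] (G : SimpleGraph V) (M : Finset (Sym2 V)) : Prop :=
  ↑M ⊆ G.edgeSet ∧ ∀ v : V, ∃! e, e ∈ M ∧ v ∈ e

/-- Number of red edges in the edge set `F` (the coloring `red` marks the red edges). -/
def redCount {V : Type*} [DecidableEq V] (red : Sym2 V → Bool) (F : Finset (Sym2 V)) : ℕ :=
  (F.filter fun e => red e = true).card

/-- Number of blue edges in the edge set `F`. -/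
def blueCount {V : Type*} [DecidableEq V] (red : Sym2 V → Bool) (F : Finset (Sym2 V)) : ℕ :=
  (F.filter fun e => red e = false).card

/-- The weight `w_M(e)`: 0 for blue edges, +1 for red non-matching edges, −1 for red
matching edges. -/
def wt {V : Type*} [DecidableEq V] (red : Sym2 V → Bool) (M : Finset (Sym2 V))
    (e : Sym2 V) : ℤ :=
  if red e then (if e ∈ M then -1 else 1) else 0

/-- `w_M(F)`, the total weight of an edge set `F`. -/
def wSum {V : Type*} [DecidableEq V] (red : Sym2 V → Bool) (M F : Finset (Sym2 V)) : ℤ :=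
  ∑ e ∈ F, wt red M e

/-- A list of edges alternates with respect to the matching `M`: consecutive edges are
alternately in and out of `M`. -/
def altList {V : Type*} [DecidableEq V] (M : Finset (Sym2 V)) (l : List (Sym2 V)) : Prop :=
  l.Chain' fun e f => ¬((e ∈ M) ↔ (f ∈ M))

/-- `C` is (the edge set of) an `M`-alternating cycle in `G`: it is traced by a cycle walk
whose edges alternate (cyclically) between `M` and non-`M` edges. -/
def IsAltCycle {V : Type*} [DecidableEq V] (G : SimpleGraph V)
    (M C : Finset (Sym2 V)) : Prop :=
  ∃ (v : V) (p : G.Walk v v), p.IsCycle ∧ p.edges.toFinset = C ∧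
    altList M (p.edges ++ p.edges.take 1)

/-- `P` is (the edge set of) an `M`-alternating path in `G`. -/
def IsAltPath {V : Type*} [DecidableEq V] (G : SimpleGraph V)
    (M P : Finset (Sym2 V)) : Prop :=
  ∃ (u v : V) (p : G.Walk u v), p.IsPath ∧ p.edges.toFinset = P ∧ altList M p.edges

/-- The symmetric difference of two edge sets. -/
def sd {V : Type*} [DecidableEq V] (M M' : Finset (Sym2 V)) : Finset (Sym2 V) :=
  (M \ M') ∪ (M' \ M)

theorem altList_cyc {V : Type*} [DecidableEq V] (M : Finset (Sym2 V)) (l : List (Sym2 V)) :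
    altList M (l ++ l.take 1) ↔ Cycle.Chain (fun e f => ¬((e ∈ M) ↔ (f ∈ M))) (l : Cycle (Sym2 V)) := by
  cases l with
  | nil => exact iff_of_true List.IsChain.nil (Cycle.Chain.nil _)
  | cons a l =>
    rw [Cycle.chain_coe_cons]
    exact Iff.rfl

theorem altCycle_at {V : Type*} [DecidableEq V] {G : SimpleGraph V}
    {M C : Finset (Sym2 V)} (hC : IsAltCycle G M C) (v : V) (g : Sym2 V) (hg : g ∈ C) (hv : v ∈ g) :
    ∃ e f, e ∈ C ∧ f ∈ C ∧ v ∈ e ∧ v ∈ f ∧ e ∈ M ∧ f ∉ M ∧ ∀ x ∈ C, v ∈ x → x = e ∨ x = f := by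
  obtain ⟨u, p, hp, rfl, halt⟩ := hC
  rw [altList_cyc] at halt
  have hvs : v ∈ p.support := by
    obtain ⟨w, rfl⟩ := hv
    exact p.fst_mem_support_of_mem_edges (by simpa using hg)
  have hq := hp.rotate hvs
  have hr := p.rotate_edges v hvs
  have hmem : ∀ x, x ∈ p.edges.toFinset ↔ x ∈ (p.rotate v hvs).edges := by
    intro x; rw [List.mem_toFinset, hr.mem_iff]
  have hcy : (p.edges : Cycle (Sym2 V)) = ((p.rotate v hvs).edges : Cycle (Sym2 V)) :=
    Cycle.coe_eq_coe.mpr hr.symm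
  rw [hcy] at halt
  simp only [hmem]
  generalize p.rotate v hvs = q at *
  have hne : q.edges ≠ [] := by
    have := hq.three_le_length
    intro h
    have h2 := q.length_edges
    rw [h] at h2; simp at h2; omega
  have hnb := hq.neighborSet_toSubgraph_endpoint
  have hnn : ¬ q.Nil := hq.not_nil
  have h1 : s(v, q.snd) ∈ q.edges := by
    rw [← SimpleGraph.Walk.adj_toSubgraph_iff_mem_edges]
    exact q.toSubgraph_adj_snd hnn
  have h2 : s(v, q.penultimate) ∈ q.edges := by
    rw [← SimpleGraph.Walk.adj_toSubgraph_iff_mem_edges]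
    exact (q.toSubgraph_adj_penultimate hnn).symm
  have hall : ∀ x ∈ q.edges, v ∈ x → x = s(v, q.snd) ∨ x = s(v, q.penultimate) := by
    intro x hx hvx
    obtain ⟨w, rfl⟩ := hvx
    have : w ∈ q.toSubgraph.neighborSet v := by
      rw [SimpleGraph.Subgraph.mem_neighborSet, SimpleGraph.Walk.adj_toSubgraph_iff_mem_edges]
      exact hx
    rw [hnb] at this
    rcases this with h | h
    · left; rw [h]
    · right; rw [h]
  rw [Cycle.chain_ne_nil _ hne] at halt
  have hlast : q.edges.getLast hne = s(v, q.penultimate) := by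
    have h := q.getLast_darts_eq_lastDart (by simpa [SimpleGraph.Walk.edges] using hne)
    simp only [SimpleGraph.Walk.edges, List.getLast_map, h]
    exact Sym2.eq_swap
  have hxor : ¬ (s(v, q.penultimate) ∈ M ↔ s(v, q.snd) ∈ M) := by
    rw [hlast] at halt
    cases q with
    | nil => simp at hne
    | cons h q' => 
      rw [SimpleGraph.Walk.edges_cons, List.isChain_cons_cons] at halt
      simpa using halt.1
  by_cases hM : s(v, q.snd) ∈ M
  · exact ⟨s(v, q.snd), s(v, q.penultimate), h1, h2, by simp, by simp, hM, by tauto, hall⟩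
  · exact ⟨s(v, q.penultimate), s(v, q.snd), h2, h1, by simp, by simp, by tauto, hM,
      fun x hx hv => (hall x hx hv).symm⟩

theorem isPM_sd {V : Type*} [DecidableEq V] {G : SimpleGraph V}
    {M C : Finset (Sym2 V)} (hM : IsPM G M) (hC : IsAltCycle G M C) : IsPM G (sd M C) := by
  refine ⟨?_, ?_⟩
  · intro e he
    simp only [sd, Finset.coe_union, Finset.coe_sdiff, Set.mem_union, Set.mem_sdiff, Finset.mem_coe] at he
    rcases he with he | he
    · exact hM.1 he.1
    · obtain ⟨u, p, hp, rfl, halt⟩ := hC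
      exact p.edges_subset_edgeSet (by simpa using he.1)
  · intro v
    obtain ⟨m, ⟨hm, hvm⟩, hu⟩ := hM.2 v
    by_cases h : ∃ g ∈ C, v ∈ g
    · obtain ⟨g, hg, hvg⟩ := h
      obtain ⟨e, f, he, hf, hve, hvf, heM, hfM, hall⟩ := altCycle_at hC v g hg hvg
      have hem := hu e ⟨heM, hve⟩
      refine ⟨f, ⟨by simp [sd, hf, hfM], hvf⟩, ?_⟩
      rintro x ⟨hx, hvx⟩
      simp only [sd, Finset.mem_union, Finset.mem_sdiff] at hx
      rcases hx with hx | hx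
      · have := hu x ⟨hx.1, hvx⟩
        subst this; subst hem; exact absurd he hx.2
      · rcases hall x hx.1 hvx with h | h
        · subst h; exact absurd heM hx.2
        · exact h
    · push Not at h
      refine ⟨m, ⟨by simp only [sd, Finset.mem_union, Finset.mem_sdiff]; exact Or.inl ⟨hm, fun h' => h m h' hvm⟩, hvm⟩, ?_⟩
      rintro x ⟨hx, hvx⟩
      simp only [sd, Finset.mem_union, Finset.mem_sdiff] at hx
      rcases hx with hx | hx
      · exact hu x ⟨hx.1, hvx⟩
      · exact absurd hvx (h x hx.1)

theorem redCount_sd {V : Type*} [DecidableEq V] (red : Sym2 V → Bool) (M C : Finset (Sym2 V)) :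
    (redCount red (sd M C) : ℤ) = redCount red M + wSum red M C := by
  have hr : ∀ F : Finset (Sym2 V), (redCount red F : ℤ) = ∑ e ∈ F, if red e = true then (1:ℤ) else 0 := by
    intro F; simp [redCount]
  rw [hr, hr, sd, Finset.sum_union (by
    rw [Finset.disjoint_left]; intro a; simp only [Finset.mem_sdiff]; tauto), wSum]
  have h1 := Finset.sum_inter_add_sum_sdiff M C fun e => if red e = true then (1:ℤ) else 0
  have h2 := Finset.sum_inter_add_sum_sdiff C M (wt red M)
  have h3 : ∑ e ∈ C \ M, wt red M e = ∑ e ∈ C \ M, if red e = true then (1:ℤ) else 0 := by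
    refine Finset.sum_congr rfl fun e he => ?_
    have := (Finset.mem_sdiff.1 he).2
    simp [wt, this]
  have h4 : ∑ e ∈ C ∩ M, wt red M e = - ∑ e ∈ M ∩ C, if red e = true then (1:ℤ) else 0 := by
    rw [← Finset.sum_neg_distrib, Finset.inter_comm]
    refine Finset.sum_congr rfl fun e he => ?_
    have := (Finset.mem_inter.1 he).1
    simp only [wt, this, if_true]
    split_ifs <;> rfl
  linarith

theorem isAlt_of_cycle {V : Type*} [DecidableEq V] {G : SimpleGraph V}
    {M0 M : Finset (Sym2 V)} (h0 : IsPM G M0) (hM : IsPM G M) {u : V} (p : G.Walk u u)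
    (hp : p.IsCycle) (hsub : ∀ e ∈ p.edges, e ∈ sd M0 M) :
    altList M0 (p.edges ++ p.edges.take 1) := by
  rw [altList_cyc]
  have hlen := hp.three_le_length
  have hne : p.darts ≠ [] := by
    intro h
    have h2 := p.length_darts
    rw [h] at h2; simp at h2; omega
  have hch : Cycle.Chain G.DartAdj (p.darts : Cycle G.Dart) := by
    rw [Cycle.chain_ne_nil _ hne]
    apply SimpleGraph.Walk.isChain_dartAdj_cons_darts
    rw [p.getLast_darts_eq_lastDart hne]
    rfl
  have hne' : p.edges ≠ [] := by simpa [SimpleGraph.Walk.edges] using hne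
  have hsh : Cycle.Chain (fun e f : Sym2 V => ∃ v, v ∈ e ∧ v ∈ f) (p.edges : Cycle (Sym2 V)) := by
    have : (p.edges : Cycle (Sym2 V)) = Cycle.map SimpleGraph.Dart.edge (p.darts : Cycle G.Dart) := rfl
    rw [this, Cycle.chain_map]
    refine hch.imp ?_
    intro a b hab
    refine ⟨a.snd, by simp [SimpleGraph.Dart.edge], ?_⟩
    rw [show a.snd = b.fst from hab]
    simp [SimpleGraph.Dart.edge]
  rw [Cycle.chain_ne_nil _ hne'] at hsh ⊢
  have hnd := hp.1.1.edges_nodup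
  have hl : 3 ≤ p.edges.length := by simpa using hlen
  generalize p.edges = l at *
  rw [List.isChain_iff_getElem] at hsh ⊢
  intro i hi
  obtain ⟨v, hv1, hv2⟩ := hsh i hi
  have hd : (l.getLast hne' :: l)[i] ≠ (l.getLast hne' :: l)[i+1] := by
    cases i with
    | zero =>
      simp only [List.getElem_cons_zero, List.getElem_cons_succ, List.getLast_eq_getElem]
      intro h
      have := (hnd.getElem_inj_iff).1 h
      omega
    | succ i =>
      simp only [List.getElem_cons_succ]
      intro h
      have := (hnd.getElem_inj_iff).1 h
      omega
  have hm1 : (l.getLast hne' :: l)[i] ∈ sd M0 M := by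
    apply hsub
    have : (l.getLast hne' :: l)[i] ∈ (l.getLast hne' :: l) := List.getElem_mem _
    rcases List.mem_cons.1 this with h | h
    · rw [h]; exact List.getLast_mem _
    · exact h
  have hm2 : (l.getLast hne' :: l)[i+1] ∈ sd M0 M := by
    apply hsub
    simp
  generalize (l.getLast hne' :: l)[i] = e at *
  generalize (l.getLast hne' :: l)[i+1] = f at *
  have e0 := (h0.2 v).unique (y₁ := e) (y₂ := f)
  have e1 := (hM.2 v).unique (y₁ := e) (y₂ := f)
  simp only [sd, Finset.mem_union, Finset.mem_sdiff] at hm1 hm2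
  tauto

theorem exists_altCycle {V : Type*} [Fintype V] [DecidableEq V] {G : SimpleGraph V}
    {M0 M : Finset (Sym2 V)} (h0 : IsPM G M0) (hM : IsPM G M) (hne : M0 ≠ M) :
    ∃ C, C.Nonempty ∧ C ⊆ sd M0 M ∧ IsAltCycle G M0 C := by
  let H : SimpleGraph V := SimpleGraph.fromEdgeSet (sd M0 M : Set (Sym2 V))
  have hsdG : ∀ e ∈ sd M0 M, e ∈ G.edgeSet := by
    intro e he
    simp only [sd, Finset.mem_union, Finset.mem_sdiff] at he
    rcases he with he | he
    · exact h0.1 he.1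
    · exact hM.1 he.1
  have hadj : ∀ a b, H.Adj a b ↔ s(a,b) ∈ sd M0 M := by
    intro a b
    simp only [H, SimpleGraph.fromEdgeSet_adj, Finset.mem_coe]
    exact ⟨fun h => h.1, fun h => ⟨h, (hsdG _ h : G.Adj a b).ne⟩⟩
  have hHG : H ≤ G := by
    intro a b hab
    exact hsdG _ ((hadj a b).1 hab)
  have hcyc : H.IsCycles := by
    rintro v ⟨w, hw⟩
    obtain ⟨m0, ⟨hm0, hv0⟩, hu0⟩ := h0.2 v
    obtain ⟨m1, ⟨hm1, hv1⟩, hu1⟩ := hM.2 v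
    obtain ⟨a, rfl⟩ := hv0
    obtain ⟨b, rfl⟩ := hv1
    have hab : a ≠ b := by
      rintro rfl
      have := (hadj v w).1 hw
      simp only [sd, Finset.mem_union, Finset.mem_sdiff] at this
      rcases this with h | h
      · have := hu0 _ ⟨h.1, by simp⟩
        rw [this] at h; exact h.2 hm1
      · have := hu1 _ ⟨h.1, by simp⟩
        rw [this] at h; exact h.2 hm0
    have : H.neighborSet v = {a, b} := by
      ext x
      rw [SimpleGraph.mem_neighborSet, hadj]
      simp only [sd, Finset.mem_union, Finset.mem_sdiff, Set.mem_insert_iff, Set.mem_singleton_iff]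
      constructor
      · rintro (h | h)
        · left; exact Sym2.congr_right.1 (hu0 _ ⟨h.1, by simp⟩)
        · right; exact Sym2.congr_right.1 (hu1 _ ⟨h.1, by simp⟩)
      · rintro (rfl | rfl)
        · left; refine ⟨hm0, fun h => hab ?_⟩
          exact Sym2.congr_right.1 (hu1 _ ⟨h, by simp⟩)
        · right; refine ⟨hm1, fun h => hab ?_⟩
          exact Sym2.congr_right.1 (hu0 _ ⟨h, by simp⟩).symm
    rw [this]; exact Set.ncard_pair hab
  have hex : ∃ e, e ∈ sd M0 M := by
    by_contra hcon
    push Not at hcon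
    apply hne
    ext e
    have := hcon e
    simp only [sd, Finset.mem_union, Finset.mem_sdiff] at this
    tauto
  obtain ⟨e, he⟩ := hex
  induction e with | _ a b =>
  obtain ⟨p, hp, -⟩ := hcyc.exists_cycle_toSubgraph_verts_eq_connectedComponentSupp
    (v := a) (c := H.connectedComponentMk a) (by simp) ⟨b, (hadj a b).2 he⟩
  have hsub : ∀ e ∈ (p.mapLe hHG).edges, e ∈ sd M0 M := by
    intro e he
    rw [SimpleGraph.Walk.edges_mapLe_eq_edges] at he
    have := p.edges_subset_edgeSet he
    induction e with | _ x y => exact (hadj x y).1 this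
  have hp' : (p.mapLe hHG).IsCycle := hp.mapLe hHG
  refine ⟨(p.mapLe hHG).edges.toFinset, ?_, ?_, a, p.mapLe hHG, hp', rfl,
    isAlt_of_cycle h0 hM _ hp' hsub⟩
  · rw [List.toFinset_nonempty_iff]
    intro h
    have h2 := (p.mapLe hHG).length_edges
    have := hp'.three_le_length
    rw [h] at h2; simp only [List.length_nil] at h2; omega
  · intro e he
    exact hsub e (by simpa using he)

theorem altCycle_flip {V : Type*} [DecidableEq V] {G : SimpleGraph V}
    {M0 M C : Finset (Sym2 V)} (hsub : C ⊆ sd M0 M) (hC : IsAltCycle G M0 C) :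
    IsAltCycle G M C := by
  obtain ⟨u, p, hp, rfl, halt⟩ := hC
  refine ⟨u, p, hp, rfl, ?_⟩
  have hfl : ∀ e ∈ p.edges ++ p.edges.take 1, (e ∈ M ↔ e ∉ M0) := by
    intro e he
    have he' : e ∈ p.edges := by
      rcases List.mem_append.1 he with h | h
      · exact h
      · exact List.mem_of_mem_take h
    have := hsub (List.mem_toFinset.2 he')
    simp only [sd, Finset.mem_union, Finset.mem_sdiff] at this
    tauto
  generalize p.edges ++ p.edges.take 1 = l at *
  unfold altList at halt ⊢
  change List.IsChain _ _ at halt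
  change List.IsChain _ _
  rw [List.isChain_iff_getElem] at halt ⊢
  intro i hi
  rw [hfl _ (List.getElem_mem _), hfl _ (List.getElem_mem _)]
  have := halt i hi
  tauto

theorem wSum_flip {V : Type*} [DecidableEq V] (red : Sym2 V → Bool)
    {M0 M C : Finset (Sym2 V)} (hsub : C ⊆ sd M0 M) : wSum red M C = - wSum red M0 C := by
  unfold wSum
  rw [← Finset.sum_neg_distrib]
  refine Finset.sum_congr rfl fun e he => ?_
  have := hsub he
  simp only [sd, Finset.mem_union, Finset.mem_sdiff] at this
  unfold wt
  rcases this with h | h <;> simp [h.1, h.2] <;> split_ifs <;> rfl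

theorem exists_odd_cycle {V : Type*} [Fintype V] [DecidableEq V] {G : SimpleGraph V}
    (red : Sym2 V → Bool) {M0 : Finset (Sym2 V)} (h0 : IsPM G M0)
    (hmin : ∀ M : Finset (Sym2 V), IsPM G M → redCount red M0 ≤ redCount red M) (n : ℕ) :
    ∀ M, IsPM G M → (sd M0 M).card ≤ n → Odd ((redCount red M : ℤ) - redCount red M0) →
      ∃ C, IsAltCycle G M0 C ∧ Odd (wSum red M0 C) ∧
        wSum red M0 C ≤ (redCount red M : ℤ) - redCount red M0 := by
  induction n with
  | zero =>
    intro M hM hc hodd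
    by_cases hne : M0 = M
    · subst hne; simp at hodd
    · obtain ⟨C, hCn, hsub, -⟩ := exists_altCycle h0 hM hne
      have := Finset.card_le_card hsub
      have := hCn.card_pos
      omega
  | succ n ih =>
    intro M hM hc hodd
    by_cases hne : M0 = M
    · subst hne; simp at hodd
    · obtain ⟨C, hCn, hsub, hC⟩ := exists_altCycle h0 hM hne
      have hC' := altCycle_flip hsub hC
      have hPM := isPM_sd hM hC'
      have hPM0 := isPM_sd h0 hC
      have hr := redCount_sd red M C
      have hr0 := redCount_sd red M0 C
      rw [wSum_flip red hsub] at hr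
      have hm := hmin _ hPM
      have hm0 := hmin _ hPM0
      by_cases ho : Odd (wSum red M0 C)
      · exact ⟨C, hC, ho, by omega⟩
      · have hcard : (sd M0 (sd M C)).card < (sd M0 M).card := by
          apply Finset.card_lt_card
          rw [Finset.ssubset_iff_of_subset]
          · obtain ⟨e, he⟩ := hCn
            refine ⟨e, hsub he, ?_⟩
            have := hsub he
            simp only [sd, Finset.mem_union, Finset.mem_sdiff] at this ⊢
            tauto
          · intro e he
            have := @hsub e
            simp only [sd, Finset.mem_union, Finset.mem_sdiff] at this he ⊢
            tauto
        rw [Int.not_odd_iff_even] at ho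
        obtain ⟨D, hD, hDo, hDle⟩ := ih (sd M C) hPM (by omega) (by
          have h5 := hodd.sub_even ho
          rw [Int.odd_iff] at h5 ⊢
          omega)
        exact ⟨D, hD, hDo, by omega⟩

/-- Let `M0` be a perfect matching of `G` with the minimum number of red edges and let `k`
be an integer with `r(M0) ≤ k` and `r(M0) ≢ k (mod 2)`. Then `G` has a perfect matching `M`
with `r(M) ≤ k` and `r(M) ≡ k (mod 2)` iff `G` has an `M0`-alternating cycle `C` with
`w_{M0}(C)` odd and `w_{M0}(C) ≤ k − r(M0)`; moreover for any such cycle `C` the perfect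
matching `M0 Δ C` satisfies `r(M0 Δ C) ≤ k` and `r(M0 Δ C) ≡ k (mod 2)`. -/
theorem exists_pm_le_k_correct_parity_iff_odd_cycle
    {V : Type*} [Fintype V] [DecidableEq V] (G : SimpleGraph V) (red : Sym2 V → Bool)
    (M0 : Finset (Sym2 V)) (k : ℤ)
    (hM0 : IsPM G M0)
    (hmin : ∀ M : Finset (Sym2 V), IsPM G M → redCount red M0 ≤ redCount red M)
    (hk : (redCount red M0 : ℤ) ≤ k)
    (hpar : ¬ ((redCount red M0 : ℤ) ≡ k [ZMOD 2])) :
    ((∃ M : Finset (Sym2 V), IsPM G M ∧ (redCount red M : ℤ) ≤ k ∧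
        (redCount red M : ℤ) ≡ k [ZMOD 2]) ↔
      (∃ C : Finset (Sym2 V), IsAltCycle G M0 C ∧ Odd (wSum red M0 C) ∧
        wSum red M0 C ≤ k - (redCount red M0 : ℤ))) ∧
    (∀ C : Finset (Sym2 V), IsAltCycle G M0 C → Odd (wSum red M0 C) →
      wSum red M0 C ≤ k - (redCount red M0 : ℤ) →
        IsPM G (sd M0 C) ∧ (redCount red (sd M0 C) : ℤ) ≤ k ∧
          (redCount red (sd M0 C) : ℤ) ≡ k [ZMOD 2]) := by
  have key : ∀ C : Finset (Sym2 V), IsAltCycle G M0 C → Odd (wSum red M0 C) →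
      wSum red M0 C ≤ k - (redCount red M0 : ℤ) →
        IsPM G (sd M0 C) ∧ (redCount red (sd M0 C) : ℤ) ≤ k ∧
          (redCount red (sd M0 C) : ℤ) ≡ k [ZMOD 2] := by
    intro C hC ho hle
    have hr := redCount_sd red M0 C
    refine ⟨isPM_sd hM0 hC, by omega, ?_⟩
    unfold Int.ModEq at hpar ⊢
    rw [Int.odd_iff] at ho
    omega
  refine ⟨⟨?_, ?_⟩, key⟩
  · rintro ⟨M, hM, hle, hmod⟩
    obtain ⟨C, hC, ho, hw⟩ := exists_odd_cycle red hM0 hmin _ M hM le_rfl (by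
      unfold Int.ModEq at hpar hmod
      rw [Int.odd_iff]
      omega)
    exact ⟨C, hC, ho, by omega⟩
  · rintro ⟨C, hC, ho, hw⟩
    exact ⟨_, key C hC ho hw⟩
end

section
/- Let t ≥ 1 be an integer, M a perfect matching of G, and 𝒞 a set of vertex-disjoint M-alternating cycles with the following properties: (i) 𝒞 contains no monochromatic cycle; (ii) the total number of edges of the cycles in 𝒞 is at least 2t³; (iii) the cycles in 𝒞 contain at most t red edges in total. Then the union of the cycles of 𝒞 contains a blue M-alternating path of length at least t. Symmetrically, if instead the cycles in 𝒞 contain at most t blue edges in total (with (i) and (ii) unchanged), then the union of the cycles of 𝒞 contains a red M-alternating path of length at least t. -/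
open Finset

/-- The set of vertices covered by an edge set. -/
def edgeVerts {V : Type*} (F : Finset (Sym2 V)) : Set V := {v | ∃ e ∈ F, v ∈ e}

/-- `𝒞` is a set of pairwise vertex-disjoint `M`-alternating cycles of `G`. -/
def IsAltCycleSet {V : Type*} [DecidableEq V] (G : SimpleGraph V) (M : Finset (Sym2 V))
    (𝒞 : Finset (Finset (Sym2 V))) : Prop :=
  (∀ C ∈ 𝒞, IsAltCycle G M C) ∧
    (𝒞 : Set (Finset (Sym2 V))).Pairwise fun C C' => Disjoint (edgeVerts C) (edgeVerts C')

theorem aux_list {α : Type*} (b : α → Bool) (t : ℕ) (ht : 1 ≤ t) : ∀ (n : ℕ) (l : List α),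
    l.length = n → (∀ m, m + t ≤ l.length → ∃ e ∈ (l.drop m).take t, b e = true) →
    l.length < (l.countP b + 1) * t := by
  intro n
  induction n using Nat.strong_induction_on with
  | _ n ih =>
    intro l hl h
    by_cases hlt : l.length < t
    · exact lt_of_lt_of_le hlt (Nat.le_mul_of_pos_left _ (Nat.succ_pos _))
    · push Not at hlt
      have h0 := h 0 (by omega)
      have h1 := ih (l.drop t).length (by simp; omega) (l.drop t) rfl (by
        intro m hm
        have := h (t + m) (by simp at hm; omega)
        simpa [List.drop_drop] using this)
      have h2 : l.countP b = (l.take t).countP b + (l.drop t).countP b := by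
        rw [← List.countP_append, List.take_append_drop]
      have h3 : 0 < (l.take t).countP b := by
        rw [List.countP_pos_iff]; simpa using h0
      have h4 : (l.drop t).length = l.length - t := by simp
      have h5 : (l.countP b + 1) * t ≥ ((l.drop t).countP b + 1 + 1) * t :=
        Nat.mul_le_mul_right _ (by omega)
      have h6 : ((l.drop t).countP b + 1 + 1) * t = ((l.drop t).countP b + 1) * t + t := by ring
      omega

theorem aux_cycle {V : Type*} [DecidableEq V] (G : SimpleGraph V) (red : Sym2 V → Bool)
    (c : Bool) (t : ℕ) (ht : 1 ≤ t) (M C : Finset (Sym2 V)) (hC : IsAltCycle G M C)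
    (hb : ∃ e ∈ C, red e = c)
    (hno : ¬ ∃ P : Finset (Sym2 V), IsAltPath G M P ∧ P ⊆ C ∧
        (∀ e ∈ P, red e = !c) ∧ t ≤ P.card) :
    C.card < 2 * t * (C.filter fun e => red e = c).card := by
  obtain ⟨v, p, hp, rfl, halt⟩ := hC
  have hnd : p.edges.Nodup := hp.edges_nodup
  have key : ∀ (x y : V) (q : G.Walk x y), q.IsPath → q.edges <:+: p.edges → q.length = t →
      ∃ e ∈ q.edges, red e = c := by
    intro x y q hq hin hlen
    by_contra hcon
    push Not at hcon
    apply hno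
    refine ⟨q.edges.toFinset, ⟨x, y, q, hq, rfl, ?_⟩, ?_, ?_, ?_⟩
    · exact List.IsChain.infix halt (hin.trans (List.prefix_append _ _).isInfix)
    · intro e he
      simp only [List.mem_toFinset] at he ⊢
      exact hin.subset he
    · intro e he
      have := hcon e (by simpa using he)
      revert this
      cases red e <;> cases c <;> simp
    · rw [List.toFinset_card_of_nodup hq.isTrail.edges_nodup, SimpleGraph.Walk.length_edges, hlen]
  have hl := aux_list (fun e => decide (red e = c)) t ht _ p.edges rfl (by
    intro m hm
    rw [SimpleGraph.Walk.length_edges] at hm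
    rcases Nat.eq_zero_or_pos m with rfl | hm0
    · by_cases hlt : t < p.length
      · obtain ⟨e, he, h⟩ := key _ _ (p.take t) (hp.isPath_take hlt)
          (by rw [SimpleGraph.Walk.edges_take]; exact (List.take_prefix _ _).isInfix)
          (by rw [SimpleGraph.Walk.take_length]; omega)
        rw [SimpleGraph.Walk.edges_take] at he
        exact ⟨e, by simpa using he, by simpa using h⟩
      · obtain ⟨e, he, h⟩ := hb
        refine ⟨e, ?_, by simpa using h⟩
        rw [List.drop_zero, List.take_of_length_le (by rw [SimpleGraph.Walk.length_edges]; omega)]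
        simpa using he
    · obtain ⟨e, he, h⟩ := key _ _ ((p.drop m).take t) ((hp.isPath_drop hm0).take t)
          (by
            rw [SimpleGraph.Walk.edges_take, SimpleGraph.Walk.edges_drop]
            exact (List.take_prefix _ _).isInfix.trans (List.drop_suffix _ _).isInfix)
          (by rw [SimpleGraph.Walk.take_length, SimpleGraph.Walk.drop_length]; omega)
      rw [SimpleGraph.Walk.edges_take, SimpleGraph.Walk.edges_drop] at he
      exact ⟨e, he, by simpa using h⟩)
  have hcount : p.edges.countP (fun e => decide (red e = c))
      = (p.edges.toFinset.filter fun e => red e = c).card := by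
    rw [List.countP_eq_length_filter, ← List.toFinset_card_of_nodup (hnd.filter _)]
    congr 1
    ext e
    simp
  have hpos : 0 < (p.edges.toFinset.filter fun e => red e = c).card := by
    obtain ⟨e, he, h⟩ := hb
    exact Finset.card_pos.2 ⟨e, by simp only [Finset.mem_filter]; exact ⟨he, h⟩⟩
  rw [hcount] at hl
  rw [List.toFinset_card_of_nodup hnd]
  nlinarith

theorem aux_main {V : Type*} [DecidableEq V] (G : SimpleGraph V) (red : Sym2 V → Bool)
    (c : Bool) (t : ℕ) (ht : 1 ≤ t) (M : Finset (Sym2 V))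
    (𝒞 : Finset (Finset (Sym2 V))) (h𝒞 : IsAltCycleSet G M 𝒞)
    (hb : ∀ C ∈ 𝒞, ∃ e ∈ C, red e = c)
    (hsize : 2 * t ^ 3 ≤ (𝒞.biUnion id).card)
    (hc : ((𝒞.biUnion id).filter fun e => red e = c).card ≤ t) :
    ∃ P : Finset (Sym2 V), IsAltPath G M P ∧ P ⊆ 𝒞.biUnion id ∧
        (∀ e ∈ P, red e = !c) ∧ t ≤ P.card := by
  by_contra hno
  have hone : ∀ C ∈ 𝒞, C.card < 2 * t * (C.filter fun e => red e = c).card := by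
    intro C hC
    refine aux_cycle G red c t ht M C (h𝒞.1 C hC) (hb C hC) ?_
    rintro ⟨P, h1, h2, h3⟩
    exact hno ⟨P, h1, h2.trans (Finset.subset_biUnion_of_mem id hC), h3⟩
  have hne : 𝒞.Nonempty := by
    rw [Finset.nonempty_iff_ne_empty]
    rintro rfl
    have : 0 < t ^ 3 := by positivity
    simp at hsize
    omega
  have hdis : ((𝒞.biUnion id).filter fun e => red e = c).card
      = ∑ C ∈ 𝒞, (C.filter fun e => red e = c).card := by
    rw [Finset.filter_biUnion, Finset.card_biUnion]
    · rfl
    · intro C hC D hD hCD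
      have hd := h𝒞.2 hC hD hCD
      apply Finset.disjoint_filter_filter
      rw [Finset.disjoint_left]
      intro e he he'
      induction e with
      | _ x y =>
        exact Set.disjoint_left.1 hd ⟨s(x, y), he, Sym2.mem_mk_left x y⟩
          ⟨s(x, y), he', Sym2.mem_mk_left x y⟩
  have hle : (𝒞.biUnion id).card ≤ ∑ C ∈ 𝒞, C.card := Finset.card_biUnion_le
  have hlt : ∑ C ∈ 𝒞, C.card < ∑ C ∈ 𝒞, 2 * t * (C.filter fun e => red e = c).card :=
    Finset.sum_lt_sum_of_nonempty hne hone
  rw [← Finset.mul_sum, ← hdis] at hlt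
  have h1 : 2 * t * ((𝒞.biUnion id).filter fun e => red e = c).card ≤ 2 * t * t :=
    Nat.mul_le_mul_left _ hc
  have h2 : t * t * 1 ≤ t * t * t := Nat.mul_le_mul_left _ ht
  have h3 : t ^ 3 = t * t * t := by ring
  have h4 : 2 * t * t = 2 * (t * t) := by ring
  omega

/-- Let `t ≥ 1`, `M` a perfect matching and `𝒞` a set of vertex-disjoint `M`-alternating
cycles containing no monochromatic cycle whose cycles have at least `2t³` edges in total.
If the cycles of `𝒞` contain at most `t` red edges then their union contains a blue
`M`-alternating path of length at least `t`; symmetrically, if they contain at most `t`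
blue edges then their union contains a red `M`-alternating path of length at least `t`. -/
theorem long_monochromatic_alt_path
    {V : Type*} [Fintype V] [DecidableEq V] (G : SimpleGraph V) (red : Sym2 V → Bool)
    (t : ℕ) (ht : 1 ≤ t) (M : Finset (Sym2 V)) (hM : IsPM G M)
    (𝒞 : Finset (Finset (Sym2 V))) (h𝒞 : IsAltCycleSet G M 𝒞)
    (hmono : ∀ C ∈ 𝒞, ¬ ((∀ e ∈ C, red e = true) ∨ (∀ e ∈ C, red e = false)))
    (hsize : 2 * t ^ 3 ≤ (𝒞.biUnion id).card) :
    (redCount red (𝒞.biUnion id) ≤ t →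
      ∃ P : Finset (Sym2 V), IsAltPath G M P ∧ P ⊆ 𝒞.biUnion id ∧
        (∀ e ∈ P, red e = false) ∧ t ≤ P.card) ∧
    (blueCount red (𝒞.biUnion id) ≤ t →
      ∃ P : Finset (Sym2 V), IsAltPath G M P ∧ P ⊆ 𝒞.biUnion id ∧
        (∀ e ∈ P, red e = true) ∧ t ≤ P.card) := by
  constructor
  · intro h
    refine aux_main G red true t ht M 𝒞 h𝒞 ?_ hsize h
    intro C hC
    by_contra hcon
    push Not at hcon
    exact hmono C hC (Or.inr fun e he => by simpa using hcon e he)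
  · intro h
    refine aux_main G red false t ht M 𝒞 h𝒞 ?_ hsize h
    intro C hC
    by_contra hcon
    push Not at hcon
    exact hmono C hC (Or.inl fun e he => by simpa using hcon e he)
end

section
/- Let G be a bipartite graph with bipartite independence number β = β(G), M a perfect matching of G, and C an M-alternating cycle. Let P ⊆ C be a blue M-alternating path of length at least 6(2β+2)², starting with a non-matching edge and not containing any 0-biskip. Then there exist two edges e1 = (b1,b2) and e2 = (w1,w2) of G with all four endpoints on P, at least one of which is red, such that C' := e1 ∪ e2 ∪ C[b1,w2] ∪ C[w1,b2] is an M-alternating cycle with 0 < w_M(C') ≤ 2 whose number of red edges equals w_M(C'). Symmetrically, if P is a red M-alternating path with the same hypotheses, then there exist such edges e1, e2, at least one of them blue, with C' an M-alternating cycle satisfying −2 ≤ w_M(C') < 0 whose number of blue edges equals |w_M(C')|. -/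
open Finset

/-- The bipartite independence number `β(G)` with respect to the bipartition given by
`side`: the largest `b` such that `G` contains a balanced independent set with `b` vertices
on each side. -/
noncomputable def bipIndepNum {V : Type*} [DecidableEq V] (G : SimpleGraph V)
    (side : V → Bool) : ℕ :=
  sSup {b | ∃ s : Finset V, (s : Set V).Pairwise (fun x y => ¬ G.Adj x y) ∧
    (s.filter fun w => side w = true).card = b ∧
    (s.filter fun w => side w = false).card = b}

/-- A biskip on the `M`-alternating cycle `C`: chords `e1` (and possibly `e2`) of `C` which
close up stretches of `C` into vertex-disjoint `M`-alternating cycles `C1` and `C2`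
(`C2 = ∅` in the single-edge case) of strictly smaller total size, the total weight change
`w(C1) + w(C2) − w(C)` being at most 4 in absolute value. -/
def IsBiskip {V : Type*} [DecidableEq V] (G : SimpleGraph V) (red : Sym2 V → Bool)
    (M C : Finset (Sym2 V)) (e1 e2 : Sym2 V) (C1 C2 : Finset (Sym2 V)) : Prop :=
  e1 ∈ G.edgeSet ∧ e1 ∉ C ∧ IsAltCycle G M C1 ∧ e1 ∈ C1 ∧ C1 \ {e1} ⊆ C ∧
  (C2 = ∅ ∨ (e2 ∈ G.edgeSet ∧ e2 ∉ C ∧ IsAltCycle G M C2 ∧ e2 ∈ C2 ∧ C2 \ {e2} ⊆ C)) ∧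
  Disjoint (edgeVerts C1) (edgeVerts C2) ∧
  C1.card + C2.card < C.card ∧
  |wSum red M C1 + wSum red M C2 - wSum red M C| ≤ 4

section helpers
variable {V : Type*} [DecidableEq V] {G : SimpleGraph V}

theorem hp_altList_iff (M : Finset (Sym2 V)) (l : List (Sym2 V)) :
    altList M l ↔ l.IsChain (fun e f => ¬((e ∈ M) ↔ (f ∈ M))) := Iff.rfl

theorem hp_cyc_iff (M : Finset (Sym2 V)) (l : List (Sym2 V)) :
    altList M (l ++ l.take 1) ↔
      Cycle.Chain (fun e f => ¬((e ∈ M) ↔ (f ∈ M))) (l : Cycle (Sym2 V)) := by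
  cases l with
  | nil => simp [hp_altList_iff]
  | cons a l => rw [hp_altList_iff, Cycle.chain_coe_cons]; simp

theorem hp_cyc_rot {M : Finset (Sym2 V)} {l l' : List (Sym2 V)} (h : l ~r l')
    (h1 : altList M (l ++ l.take 1)) : altList M (l' ++ l'.take 1) := by
  rw [hp_cyc_iff] at *
  have : (l : Cycle (Sym2 V)) = l' := Cycle.coe_eq_coe.2 h
  rwa [← this]

theorem hp_cyc_rev {M : Finset (Sym2 V)} {l : List (Sym2 V)}
    (h1 : altList M (l ++ l.take 1)) : altList M (l.reverse ++ l.reverse.take 1) := by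
  cases l with
  | nil => simpa using h1
  | cons a l =>
    have h2 : altList M ((a :: l.reverse) ++ (a :: l.reverse).take 1) := by
      rw [hp_altList_iff] at *
      have h3 : (a :: l.reverse) ++ (a :: l.reverse).take 1
        = ((a :: l) ++ (a :: l).take 1).reverse := by simp
      rw [h3, List.isChain_reverse]
      refine h1.imp ?_
      intro x y h; tauto
    refine hp_cyc_rot ?_ h2
    rw [List.reverse_cons]
    exact ⟨1, by simp⟩

/-- base case: start a cycle with a given edge. -/
theorem hp_base {M C : Finset (Sym2 V)} (hC : IsAltCycle G M C) {a z : V} (h : G.Adj a z)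
    (hm : s(a, z) ∈ C) : ∃ r : G.Walk z a, (SimpleGraph.Walk.cons h r).IsCycle ∧
      (SimpleGraph.Walk.cons h r).edges.toFinset = C ∧
      altList M ((SimpleGraph.Walk.cons h r).edges ++ (SimpleGraph.Walk.cons h r).edges.take 1) := by
  obtain ⟨v, p, hp, hpe, hpa⟩ := hC
  have hm' : s(a, z) ∈ p.edges := by rw [← hpe] at hm; simpa using hm
  have ha : a ∈ p.support := p.fst_mem_support_of_mem_edges hm'
  obtain ⟨c, hc, hce, hca⟩ : ∃ c : G.Walk a a, c.IsCycle ∧ c.edges.toFinset = C ∧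
      altList M (c.edges ++ c.edges.take 1) := by
    refine ⟨p.rotate a ha, hp.rotate ha, ?_, ?_⟩
    · rw [← hpe]; ext e; simp [(p.rotate_edges a ha).mem_iff]
    · exact hp_cyc_rot (p.rotate_edges a ha).symm hpa
  have key : ∀ c : G.Walk a a, c.IsCycle → c.edges.toFinset = C →
      altList M (c.edges ++ c.edges.take 1) → c.snd = z → 
      ∃ r : G.Walk z a, (SimpleGraph.Walk.cons h r).IsCycle ∧
      (SimpleGraph.Walk.cons h r).edges.toFinset = C ∧
      altList M ((SimpleGraph.Walk.cons h r).edges ++ (SimpleGraph.Walk.cons h r).edges.take 1) := by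
    intro c hc hce hca hz
    cases c with
    | nil => simp at hc
    | cons h' r => 
      simp at hz
      subst hz
      exact ⟨r, hc, hce, hca⟩
  by_cases hz : c.snd = z
  · exact key c hc hce hca hz
  · refine key c.reverse hc.reverse (by simpa using hce) ?_ ?_
    · rw [SimpleGraph.Walk.edges_reverse]; exact hp_cyc_rev hca
    · cases c with
      | nil => simp at hc
      | cons h' r =>
        rw [SimpleGraph.Walk.cons_isCycle_iff] at hc
        rw [← hce] at hm
        simp at hz hm
        rw [SimpleGraph.Walk.snd_reverse]
        have h2 : s(a, z) ∈ r.edges := by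
          rcases hm with hm | hm
          · exfalso
            rcases hm with hm | hm
            · exact hz hm.symm
            · exact h'.ne hm.1
          · exact hm
        have h3 := hc.1.eq_penultimate_of_mem_edges h2
        rw [h3, SimpleGraph.Walk.penultimate_cons_of_not_nil]
        intro hn
        have := hn.eq
        exact h'.ne this.symm

theorem hp_complete {M C : Finset (Sym2 V)} (hC : IsAltCycle G M C) {a b : V} (s : G.Walk a b)
    (hs : s.IsPath) (hn : ¬ s.Nil) (hm : ∀ e ∈ s.edges, e ∈ C) :
    ∃ r : G.Walk b a, (s.append r).IsCycle ∧
      (s.append r).edges.toFinset = C ∧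
      altList M ((s.append r).edges ++ (s.append r).edges.take 1) := by
  induction s using SimpleGraph.Walk.concatRec with
  | Hnil => simp at hn
  | Hconcat s' h ih =>
    rename_i u y z
    by_cases hn' : s'.Nil
    · cases s' with
      | cons _ _ => simp at hn'
      | nil =>
        obtain ⟨r, h1, h2, h3⟩ := hp_base hC h (hm _ (by simp))
        exact ⟨r, h1, h2, h3⟩
    · have hp' := (SimpleGraph.Walk.concat_isPath_iff h).1 hs
      obtain ⟨r, h1, h2, h3⟩ := ih hp'.1 hn' (fun e he => hm e (by simp [he]))
      have hr : r.IsPath := h1.isPath_of_append_right hn'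
      have he : s(y, z) ∈ (s'.append r).edges := by
        have := hm s(y,z) (by simp)
        rw [← h2] at this
        simpa using this
      rw [SimpleGraph.Walk.edges_append, List.mem_append] at he
      rcases he with he | he
      · exact absurd (s'.snd_mem_support_of_mem_edges he) hp'.2
      · have hz := hr.eq_snd_of_mem_edges he
        cases r with
        | nil => simp at he
        | cons h' r' =>
          simp at hz
          subst hz
          refine ⟨r', ?_, ?_, ?_⟩
          · rwa [SimpleGraph.Walk.concat_append]
          · rwa [SimpleGraph.Walk.concat_append]
          · rwa [SimpleGraph.Walk.concat_append]

theorem hp_indep [Fintype V] (side : V → Bool) (c : Bool) (S T : Finset V)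
    (hbip : ∀ x y : V, G.Adj x y → side x ≠ side y)
    (hS : ∀ x ∈ S, side x = c) (hT : ∀ x ∈ T, side x = !c)
    (hSc : S.card = bipIndepNum G side + 1) (hTc : T.card = bipIndepNum G side + 1) :
    ∃ x ∈ S, ∃ y ∈ T, G.Adj x y := by
  by_contra hcon
  push Not at hcon
  have hmem : bipIndepNum G side + 1 ∈ {b | ∃ s : Finset V, (s : Set V).Pairwise (fun x y => ¬ G.Adj x y) ∧
    (s.filter fun w => side w = true).card = b ∧
    (s.filter fun w => side w = false).card = b} := by
    refine ⟨S ∪ T, ?_, ?_⟩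
    · intro x hx y hy _ hadj
      have h0 := hbip x y hadj
      simp at hx hy
      rcases hx with hx | hx <;> rcases hy with hy | hy
      · exact h0 (by rw [hS x hx, hS y hy])
      · exact hcon x hx y hy hadj
      · exact hcon y hy x hx hadj.symm
      · exact h0 (by rw [hT x hx, hT y hy])
    · have e1 : (S ∪ T).filter (fun w => side w = c) = S := by
        ext x; simp; constructor
        · rintro ⟨h | h, h'⟩
          · exact h
          · rw [hT x h] at h'; cases c <;> simp at h'
        · intro h; exact ⟨Or.inl h, hS x h⟩
      have e2 : (S ∪ T).filter (fun w => side w = !c) = T := by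
        ext x; simp; constructor
        · rintro ⟨h | h, h'⟩
          · rw [hS x h] at h'; cases c <;> simp at h'
          · exact h
        · intro h; exact ⟨Or.inr h, hT x h⟩
      cases c
      · exact ⟨(congrArg Finset.card e2).trans hTc, (congrArg Finset.card e1).trans hSc⟩
      · exact ⟨(congrArg Finset.card e1).trans hSc, (congrArg Finset.card e2).trans hTc⟩
  have := le_csSup (s := {b | ∃ s : Finset V, (s : Set V).Pairwise (fun x y => ¬ G.Adj x y) ∧
    (s.filter fun w => side w = true).card = b ∧
    (s.filter fun w => side w = false).card = b}) ⟨Fintype.card V, by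
      rintro b ⟨s, -, hb, -⟩
      rw [← hb]; exact Finset.card_le_univ _⟩ hmem
  have h' : bipIndepNum G side + 1 ≤ bipIndepNum G side := this
  omega

theorem hp_find [Fintype V] (side : V → Bool) (x : ℕ → V) (L m n : ℕ)
    (hbip : ∀ x y : V, G.Adj x y → side x ≠ side y)
    (hadj : ∀ i < L, G.Adj (x i) (x (i+1))) (hinj : Set.InjOn x {i | i ≤ L})
    (hm : m + 2 * bipIndepNum G side ≤ L) (hn : n + 2 * bipIndepNum G side ≤ L)
    (hmn : (m + n) % 2 = 1) :
    ∃ s ≤ bipIndepNum G side, ∃ t ≤ bipIndepNum G side, G.Adj (x (m + 2 * s)) (x (n + 2 * t)) := by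
  have hside : ∀ i ≤ L, side (x i) = xor (side (x 0)) (decide (i % 2 = 1)) := by
    intro i
    induction i with
    | zero => simp
    | succ i ih =>
      intro hi
      have h1 := ih (by omega)
      have h2 := hbip _ _ (hadj i (by omega))
      rw [h1] at h2
      rcases Nat.mod_two_eq_zero_or_one i with h | h
      · have h3 : (i+1) % 2 = 1 := by omega
        rw [h3]; rw [h] at h2
        revert h2; cases side (x 0) <;> cases side (x (i+1)) <;> simp
      · have h3 : (i+1) % 2 = 0 := by omega
        rw [h3]; rw [h] at h2
        revert h2; cases side (x 0) <;> cases side (x (i+1)) <;> simp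
  set B := bipIndepNum G side with hB
  have hcard : ∀ k, k + 2 * B ≤ L → ((Finset.range (B+1)).image (fun t => x (k + 2 * t))).card = B + 1 := by
    intro k hk
    rw [Finset.card_image_of_injOn, Finset.card_range]
    intro s hs t ht hst
    simp at hs ht
    have := hinj (by simp; omega) (by simp; omega) hst
    omega
  obtain ⟨a, ha, b, hb, hab⟩ := hp_indep (G := G) side (side (x m))
    ((Finset.range (B+1)).image (fun t => x (m + 2 * t)))
    ((Finset.range (B+1)).image (fun t => x (n + 2 * t))) hbip
    (by
      intro a ha
      simp only [Finset.mem_image, Finset.mem_range] at ha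
      obtain ⟨t, ht, rfl⟩ := ha
      rw [hside _ (by omega), hside m (by omega)]
      simp)
    (by
      intro a ha
      simp only [Finset.mem_image, Finset.mem_range] at ha
      obtain ⟨t, ht, rfl⟩ := ha
      rw [hside _ (by omega), hside m (by omega)]
      rcases Nat.mod_two_eq_zero_or_one m with h | h
      · have : n % 2 = 1 := by omega
        simp [h, this]
      · have : n % 2 = 0 := by omega
        simp [h, this])
    (hcard m hm) (hcard n hn)
  simp only [Finset.mem_image, Finset.mem_range] at ha hb
  obtain ⟨s, hs, rfl⟩ := ha
  obtain ⟨t, ht, rfl⟩ := hb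
  exact ⟨s, by omega, t, by omega, hab⟩

/-- Segment of a walk. -/
theorem hp_seg {u v : V} (p : G.Walk u v) (m n : ℕ) (hmn : m ≤ n) (hn : n ≤ p.length) :
    ∃ q : G.Walk (p.getVert m) (p.getVert n), q.edges = (p.edges.drop m).take (n - m) ∧
      q.support = (p.support.drop m).take (n - m + 1) := by
  have h : (p.drop m).getVert (n - m) = p.getVert n := by
    rw [SimpleGraph.Walk.drop_getVert]; congr 1; omega
  refine ⟨((p.drop m).take (n-m)).copy rfl h, ?_, ?_⟩
  · rw [SimpleGraph.Walk.edges_copy, SimpleGraph.Walk.edges_take, SimpleGraph.Walk.edges_drop]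
  · rw [SimpleGraph.Walk.support_copy, SimpleGraph.Walk.support_take,
      SimpleGraph.Walk.drop_support_eq_support_drop_min, min_eq_left (by omega)]

theorem hp_wsum (red : Sym2 V → Bool) (M : Finset (Sym2 V)) {l : List (Sym2 V)} (hl : l.Nodup) :
    wSum red M l.toFinset = (l.map (wt red M)).sum := by
  rw [wSum, List.sum_toFinset _ hl]

theorem hp_blue (red : Sym2 V → Bool) (M : Finset (Sym2 V)) {l : List (Sym2 V)}
    (hl : ∀ e ∈ l, red e = false) : (l.map (wt red M)).sum = 0 := by
  apply List.sum_eq_zero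
  intro x hx
  obtain ⟨e, he, rfl⟩ := List.mem_map.1 hx
  simp [wt, hl e he]

theorem hp_red (red : Sym2 V → Bool) (M : Finset (Sym2 V)) (l : List (Sym2 V)) (hne : l ≠ [])
    (hl : ∀ e ∈ l, red e = true) (ha : altList M l) :
    2 * (l.map (wt red M)).sum = wt red M (l.head hne) + wt red M (l.getLast hne) := by
  induction l with
  | nil => exact absurd rfl hne
  | cons x l ih =>
    cases l with
    | nil => simp; ring
    | cons y l =>
      rw [hp_altList_iff, List.isChain_cons_cons] at ha
      have h1 := ih (by simp) (fun e he => hl e (by simp [he])) ha.2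
      simp only [List.map_cons, List.sum_cons, List.head_cons] at h1 ⊢
      rw [List.getLast_cons (by simp)]
      have hx := hl x (by simp)
      have hy := hl y (by simp)
      have h2 : wt red M x = - wt red M y := by
        have := ha.1
        by_cases h : x ∈ M <;> by_cases h' : y ∈ M <;> simp_all [wt]
      linarith

theorem hp_parity {M : Finset (Sym2 V)} {l : List (Sym2 V)} (ha : altList M l)
    (hs : ∀ e, l.head? = some e → e ∉ M) (i : ℕ) (hi : i < l.length) :
    l[i] ∈ M ↔ i % 2 = 1 := by
  induction i with
  | zero =>
    have := hs l[0] (by rw [List.head?_eq_getElem?]; simp [hi])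
    simp [this]
  | succ i ih =>
    have h1 := ih (by omega)
    have h2 := List.isChain_iff_getElem.1 ((hp_altList_iff _ _).1 ha) i (by omega)
    rw [h1] at h2
    rcases Nat.mod_two_eq_zero_or_one i with h | h
    · have h3 : (i+1) % 2 = 1 := by omega
      simp only [h, h3] at h2 ⊢
      simp at h2
      simp [h2]
    · have h3 : (i+1) % 2 = 0 := by omega
      simp only [h, h3] at h2 ⊢
      simp at h2
      simp [h2]

theorem hp_seg2 {M : Finset (Sym2 V)} {u v : V} (p : G.Walk u v) (ha : altList M p.edges)
    (hs : ∀ e, p.edges.head? = some e → e ∉ M) (hp : p.IsPath)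
    (m n : ℕ) (hmn : m < n) (hn : n ≤ p.length) :
    ∃ q : G.Walk (p.getVert m) (p.getVert n), q.IsPath ∧ (∀ e ∈ q.edges, e ∈ p.edges) ∧
      q.support = (p.support.drop m).take (n - m + 1) ∧ altList M q.edges ∧
      q.length = n - m ∧ (∀ e ∈ q.edges.head?, e ∈ M ↔ m % 2 = 1) ∧
      (∀ e ∈ q.edges.getLast?, e ∈ M ↔ n % 2 = 0) := by
  obtain ⟨q, h1, h2⟩ := hp_seg p m n hmn.le hn
  have hpl : p.edges.length = p.length := p.length_edges
  refine ⟨q, ?_, ?_, h2, ?_, ?_, ?_, ?_⟩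
  · rw [SimpleGraph.Walk.isPath_def, h2]
    exact (hp.support_nodup.sublist (List.drop_sublist _ _)).sublist (List.take_sublist _ _)
  · intro e he
    rw [h1] at he
    exact List.mem_of_mem_drop (List.mem_of_mem_take he)
  · rw [h1]
    exact List.IsChain.take (List.IsChain.drop ha _) _
  · rw [← q.length_edges, h1]; simp; omega
  · intro e he
    rw [h1, List.head?_eq_getElem?] at he
    have hlt : m < p.edges.length := by omega
    have : e = p.edges[m] := by
      rw [List.getElem?_take_of_lt (by omega), List.getElem?_drop] at he
      simp at he
      rw [List.getElem?_eq_getElem hlt] at he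
      simpa using he.symm
    rw [this]
    exact hp_parity ha hs m hlt
  · intro e he
    have hlt : n - 1 < p.edges.length := by omega
    have : e = p.edges[n-1] := by
      rw [h1, List.getLast?_eq_getElem?] at he
      have hl : ((p.edges.drop m).take (n-m)).length = n - m := by simp; omega
      rw [hl, List.getElem?_take_of_lt (by omega), List.getElem?_drop] at he
      have : m + (n - m - 1) = n - 1 := by omega
      rw [this, List.getElem?_eq_getElem hlt] at he
      simpa using he.symm
    rw [this, hp_parity ha hs (n-1) hlt]
    omega

theorem hp_skip (red : Sym2 V → Bool) {M C : Finset (Sym2 V)} (hC : IsAltCycle G M C) {a b : V}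
    (s : G.Walk a b) (hs : s.IsPath) (hl : 2 ≤ s.length) (hm : ∀ e ∈ s.edges, e ∈ C)
    (hh : ∀ e ∈ s.edges.head?, e ∉ M) (ht : ∀ e ∈ s.edges.getLast?, e ∉ M)
    (h : G.Adj a b) (hM : s(a, b) ∉ M) (hsn : s(a, b) ∉ s.edges) :
    s(a, b) ∉ C ∧ ∃ C1, IsAltCycle G M C1 ∧ s(a, b) ∈ C1 ∧ C1 \ {s(a, b)} ⊆ C ∧ C1.card < C.card ∧
      C \ C1 ⊆ s.edges.toFinset ∧
      wSum red M C1 - wSum red M C = wt red M s(a, b) - (s.edges.map (wt red M)).sum := by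
  have hnn : ¬ s.Nil := by
    rw [← SimpleGraph.Walk.length_eq_zero_iff]; omega
  obtain ⟨r, h1, h2, h3⟩ := hp_complete hC s hs hnn hm
  have hr : r.IsPath := h1.isPath_of_append_right hnn
  have hsne : s.edges ≠ [] := by
    intro h0; have := s.length_edges; rw [h0] at this; simp at this; omega
  have hrne : r.edges ≠ [] := by
    intro h0
    cases r with
    | nil => exact h.ne rfl
    | cons _ _ => simp at h0
  have hnd := h1.isTrail.edges_nodup
  rw [SimpleGraph.Walk.edges_append] at h2 h3 hnd
  rw [hp_altList_iff] at h3
  obtain ⟨f, l, hfl⟩ := List.exists_cons_of_ne_nil hsne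
  have htake : (s.edges ++ r.edges).take 1 = [f] := by rw [hfl]; simp
  rw [htake, List.isChain_append, List.isChain_append] at h3
  obtain ⟨⟨c1, c2, c3⟩, -, c4⟩ := h3
  have hf : f ∉ M := hh f (by rw [hfl]; simp)
  have hrh : ∀ e ∈ r.edges.head?, e ∈ M := by
    intro e he
    have := c3 (s.edges.getLast hsne) (by simp [List.getLast?_eq_some_getLast hsne]) e he
    have h5 := ht (s.edges.getLast hsne) (by simp [List.getLast?_eq_some_getLast hsne])
    tauto
  have hrt : ∀ e ∈ r.edges.getLast?, e ∈ M := by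
    intro e he
    have := c4 e (by rw [List.getLast?_append]; simp at he; simp [he]) f (by simp)
    tauto
  have hnr : s(a, b) ∉ r.edges := by
    intro h0
    have h0' := h0
    rw [Sym2.eq_swap] at h0
    have := hr.eq_snd_of_mem_edges h0
    cases r with
    | nil => simp at hrne
    | cons h' r' =>
      simp at this
      subst this
      exact hM (by rw [Sym2.eq_swap]; exact hrh _ (by simp))
  have hcy : (SimpleGraph.Walk.cons h r).IsCycle := by
    rw [SimpleGraph.Walk.cons_isCycle_iff]; exact ⟨hr, hnr⟩
  have hnd2 := hcy.isTrail.edges_nodup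
  refine ⟨?_, (SimpleGraph.Walk.cons h r).edges.toFinset, ⟨a, _, hcy, rfl, ?_⟩, by simp, ?_, ?_, ?_, ?_⟩
  · rw [← h2]; simp [hsn, hnr]
  · rw [SimpleGraph.Walk.edges_cons, hp_altList_iff]
    simp only [List.take_succ_cons, List.take_zero]
    rw [List.isChain_append, List.isChain_cons]
    refine ⟨⟨?_, c2⟩, by simp, ?_⟩
    · intro y hy; have := hrh y hy; tauto
    · intro x hx y hy
      simp at hy
      subst hy
      have : x ∈ M := hrt x (by
        rw [List.getLast?_cons] at hx
        rw [List.getLast?_eq_some_getLast hrne] at hx ⊢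
        simpa using hx)
      tauto
  · rw [← h2]; intro e he; simp at he ⊢; tauto
  · rw [← h2, List.toFinset_card_of_nodup hnd2, List.toFinset_card_of_nodup hnd]
    simp
    omega
  · rw [← h2]; intro e he; simp at he ⊢; tauto
  · rw [← h2, hp_wsum _ _ hnd2, hp_wsum _ _ hnd]
    simp

theorem hp_big {M : Finset (Sym2 V)} {b a b' a' : V} (p1 : G.Walk b a) (p2 : G.Walk b' a')
    (h : G.Adj a b') (h' : G.Adj a' b) (hne : a ≠ b) (hne' : a' ≠ b')
    (hnd : (p1.support ++ p2.support).Nodup)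
    (c1 : altList M p1.edges) (c2 : altList M p2.edges)
    (hh1 : ∀ e ∈ p1.edges.head?, e ∈ M) (ht1 : ∀ e ∈ p1.edges.getLast?, e ∈ M)
    (hh2 : ∀ e ∈ p2.edges.head?, e ∈ M) (ht2 : ∀ e ∈ p2.edges.getLast?, e ∈ M)
    (hM : s(a, b') ∉ M) (hM' : s(a', b) ∉ M) :
    (s(a', b) :: (p1.edges ++ s(a, b') :: p2.edges)).Nodup ∧
    IsAltCycle G M (s(a', b) :: (p1.edges ++ s(a, b') :: p2.edges)).toFinset := by
  have hpath : (p1.append (.cons h p2)).IsPath := by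
    rw [SimpleGraph.Walk.isPath_def, SimpleGraph.Walk.support_append]
    simpa using hnd
  have hdis := List.disjoint_of_nodup_append hnd
  have hed : (p1.append (.cons h p2)).edges = p1.edges ++ s(a, b') :: p2.edges := by simp
  have hcy : (SimpleGraph.Walk.cons h' (p1.append (.cons h p2))).IsCycle := by
    rw [SimpleGraph.Walk.cons_isCycle_iff]
    refine ⟨hpath, ?_⟩
    rw [hed]
    intro h0
    rw [List.mem_append, List.mem_cons] at h0
    rcases h0 with h0 | h0 | h0
    · exact hdis (p1.fst_mem_support_of_mem_edges h0) p2.end_mem_support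
    · rw [Sym2.eq_iff] at h0
      rcases h0 with ⟨h0, _⟩ | ⟨h0, _⟩
      · exact hdis p1.end_mem_support (h0 ▸ p2.end_mem_support)
      · exact hne' h0
    · exact hdis p1.start_mem_support (p2.snd_mem_support_of_mem_edges h0)
  have e1 : p1.edges ≠ [] := by
    intro h0
    cases p1 with
    | nil => exact hne rfl
    | cons _ _ => simp at h0
  have e2 : p2.edges ≠ [] := by
    intro h0
    cases p2 with
    | nil => exact hne' rfl
    | cons _ _ => simp at h0
  have hE : (SimpleGraph.Walk.cons h' (p1.append (.cons h p2))).edges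
    = s(a', b) :: (p1.edges ++ s(a, b') :: p2.edges) := by simp
  refine ⟨hE ▸ hcy.isTrail.edges_nodup, _, _, hcy, by rw [hE], ?_⟩
  rw [hE, hp_altList_iff]
  simp only [List.take_succ_cons, List.take_zero]
  rw [hp_altList_iff] at c1 c2
  rw [List.isChain_append, List.isChain_cons, List.isChain_append, List.isChain_cons]
  refine ⟨⟨?_, c1, ⟨?_, c2⟩, ?_⟩, by simp, ?_⟩
  · intro y hy
    have : y ∈ M := hh1 y (by
      rw [List.head?_append, List.head?_eq_some_head e1] at hy
      rw [List.head?_eq_some_head e1]; simpa using hy)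
    tauto
  · intro y hy; have := hh2 y hy; tauto
  · intro x hx y hy
    have := ht1 x hx
    simp at hy; subst hy; tauto
  · intro x hx y hy
    simp at hy; subst hy
    have : x ∈ M := ht2 x (by
        rw [List.getLast?_cons, List.getLast?_append, List.getLast?_cons] at hx
        rw [List.getLast?_eq_some_getLast e2] at hx ⊢
        simpa using hx)
    tauto

theorem hp_unique {M : Finset (Sym2 V)} (hM : IsPM G M) {y z w : V} (h1 : s(y, z) ∈ M)
    (h2 : s(y, w) ∈ M) : w = z := by
  obtain ⟨e, -, he⟩ := hM.2 y
  have := (he _ ⟨h1, by simp⟩).trans (he _ ⟨h2, by simp⟩).symm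
  rw [Sym2.eq_iff] at this
  rcases this with ⟨_, h⟩ | ⟨h, h'⟩
  · exact h.symm
  · rw [h'.symm] at h; exact h.symm

theorem hp_red' (red : Sym2 V → Bool) (M : Finset (Sym2 V)) (l : List (Sym2 V)) (hne : l ≠ [])
    (hl : ∀ e ∈ l, red e = true) (ha : altList M l)
    (hh : ∀ e ∈ l.head?, e ∈ M) (ht : ∀ e ∈ l.getLast?, e ∈ M) :
    (l.map (wt red M)).sum = -1 := by
  have := hp_red red M l hne hl ha
  have h1 := hh _ (by rw [List.head?_eq_some_head hne]; rfl)
  have h2 := ht _ (by rw [List.getLast?_eq_some_getLast hne]; rfl)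
  have h3 := hl _ (List.head_mem hne)
  have h4 := hl _ (List.getLast_mem hne)
  simp [wt, h1, h2, h3, h4] at this
  omega

theorem hp_red'' (red : Sym2 V → Bool) (M : Finset (Sym2 V)) (l : List (Sym2 V)) (hne : l ≠ [])
    (hl : ∀ e ∈ l, red e = true) (ha : altList M l)
    (hh : ∀ e ∈ l.head?, e ∉ M) (ht : ∀ e ∈ l.getLast?, e ∉ M) :
    (l.map (wt red M)).sum = 1 := by
  have := hp_red red M l hne hl ha
  have h1 := hh _ (by rw [List.head?_eq_some_head hne]; rfl)
  have h2 := ht _ (by rw [List.getLast?_eq_some_getLast hne]; rfl)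
  have h3 := hl _ (List.head_mem hne)
  have h4 := hl _ (List.getLast_mem hne)
  simp [wt, h1, h2, h3, h4] at this
  omega

end helpers

/-- Bipartite lemma "biskip or cycle": in a bipartite graph, let `C` be an `M`-alternating
cycle and `P ⊆ C` a monochromatic `M`-alternating path of length at least `6(2β+2)²`
starting with a non-matching edge and containing no 0-biskip. If `P` is blue, there are two
chords `e1, e2` with endpoints on `P`, at least one red, closing up with parts of `C` into
an `M`-alternating cycle `C'` with `0 < w_M(C') ≤ 2` whose number of red edges equals
`w_M(C')`; if `P` is red, the symmetric conclusion holds. -/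
theorem biskip_or_small_cycle
    {V : Type*} [Fintype V] [DecidableEq V] (G : SimpleGraph V) (red : Sym2 V → Bool)
    (side : V → Bool) (hbip : ∀ x y : V, G.Adj x y → side x ≠ side y)
    (M C : Finset (Sym2 V)) (hM : IsPM G M) (hC : IsAltCycle G M C)
    (u v : V) (p : G.Walk u v) (hpath : p.IsPath) (halt : altList M p.edges)
    (hPC : p.edges.toFinset ⊆ C)
    (hlen : 6 * (2 * bipIndepNum G side + 2) ^ 2 ≤ p.length)
    (hstart : ∀ e : Sym2 V, p.edges.head? = some e → e ∉ M)
    (hnobiskip : ¬ ∃ (e1 e2 : Sym2 V) (C1 C2 : Finset (Sym2 V)),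
      IsBiskip G red M C e1 e2 C1 C2 ∧
      wSum red M C1 + wSum red M C2 - wSum red M C = 0 ∧
      C \ (C1 ∪ C2) ⊆ p.edges.toFinset) :
    ((∀ e ∈ p.edges, red e = false) →
      ∃ (e1 e2 : Sym2 V) (C' : Finset (Sym2 V)),
        e1 ∈ G.edgeSet ∧ e2 ∈ G.edgeSet ∧ e1 ≠ e2 ∧
        (∀ a : V, a ∈ e1 → ∃ f ∈ p.edges, a ∈ f) ∧
        (∀ a : V, a ∈ e2 → ∃ f ∈ p.edges, a ∈ f) ∧
        (red e1 = true ∨ red e2 = true) ∧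
        IsAltCycle G M C' ∧ e1 ∈ C' ∧ e2 ∈ C' ∧ C' \ {e1, e2} ⊆ C ∧
        0 < wSum red M C' ∧ wSum red M C' ≤ 2 ∧
        (redCount red C' : ℤ) = wSum red M C') ∧
    ((∀ e ∈ p.edges, red e = true) →
      ∃ (e1 e2 : Sym2 V) (C' : Finset (Sym2 V)),
        e1 ∈ G.edgeSet ∧ e2 ∈ G.edgeSet ∧ e1 ≠ e2 ∧
        (∀ a : V, a ∈ e1 → ∃ f ∈ p.edges, a ∈ f) ∧
        (∀ a : V, a ∈ e2 → ∃ f ∈ p.edges, a ∈ f) ∧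
        (red e1 = false ∨ red e2 = false) ∧
        IsAltCycle G M C' ∧ e1 ∈ C' ∧ e2 ∈ C' ∧ C' \ {e1, e2} ⊆ C ∧
        -2 ≤ wSum red M C' ∧ wSum red M C' < 0 ∧
        (blueCount red C' : ℤ) = |wSum red M C'|) := by
  set B := bipIndepNum G side with hB
  have hL : 24 * B + 24 ≤ p.length := by nlinarith
  have hadj : ∀ i < p.length, G.Adj (p.getVert i) (p.getVert (i+1)) :=
    fun i hi => p.adj_getVert_succ hi
  have hinj := hpath.getVert_injOn
  obtain ⟨s, hs, t, ht, hback⟩ := hp_find (G := G) side p.getVert p.length 1 (6 * B + 8) hbip hadj hinj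
    (by omega) (by omega) (by omega)
  obtain ⟨s', hs', t', ht', hskip⟩ := hp_find (G := G) side p.getVert p.length (2 * B + 4)
    (4 * B + 7) hbip hadj hinj (by omega) (by omega) (by omega)
  rw [← hB] at hs ht hs' ht'
  obtain ⟨k, hk⟩ : ∃ k, k = 1 + 2 * s := ⟨_, rfl⟩
  obtain ⟨l, hl⟩ : ∃ l, l = 6 * B + 8 + 2 * t := ⟨_, rfl⟩
  obtain ⟨i, hi⟩ : ∃ i, i = 2 * B + 4 + 2 * s' := ⟨_, rfl⟩
  obtain ⟨j, hj⟩ : ∃ j, j = 4 * B + 7 + 2 * t' := ⟨_, rfl⟩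
  rw [← hk, ← hl] at hback
  rw [← hi, ← hj] at hskip
  have inj : ∀ m n, m ≤ p.length → n ≤ p.length → p.getVert m = p.getVert n → m = n :=
    fun m n hm hn h => hinj hm hn h
  have hpl : p.edges.length = p.length := p.length_edges
  have hedge : ∀ m (h : m < p.edges.length), p.edges[m] = s(p.getVert m, p.getVert (m+1)) :=
    fun m h => SimpleGraph.Walk.getElem_edges h
  have hon : ∀ m, m ≤ p.length → ∃ f ∈ p.edges, p.getVert m ∈ f := by
    intro m hm
    by_cases h : m < p.length
    · exact ⟨p.edges[m]'(by omega), List.getElem_mem _, by rw [hedge]; simp⟩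
    · obtain ⟨m', rfl⟩ : ∃ m', m = m' + 1 := ⟨m - 1, by omega⟩
      exact ⟨p.edges[m']'(by omega), List.getElem_mem _, by rw [hedge]; simp⟩
  -- chords are not matching edges
  have hbM : s(p.getVert l, p.getVert k) ∉ M := by
    intro h
    have h1 := (hp_parity halt hstart k (by omega)).2 (by omega)
    rw [hedge] at h1
    rw [Sym2.eq_swap] at h
    have := inj _ _ (by omega) (by omega) (hp_unique hM h1 h)
    omega
  have hsM : s(p.getVert i, p.getVert j) ∉ M := by
    intro h
    have h1 := (hp_parity halt hstart (i-1) (by omega)).2 (by omega)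
    rw [hedge, Sym2.eq_swap, Nat.sub_add_cancel (by omega)] at h1
    have := inj _ _ (by omega) (by omega) (hp_unique hM h1 h)
    omega
  have hsP : s(p.getVert i, p.getVert j) ∉ p.edges := by
    intro h
    obtain ⟨m, hm, hme⟩ := List.getElem_of_mem h
    rw [hedge, Sym2.eq_iff] at hme
    rcases hme with ⟨h1, h2⟩ | ⟨h1, h2⟩
    · have := inj _ _ (by omega) (by omega) h1
      have := inj _ _ (by omega) (by omega) h2
      omega
    · have := inj _ _ (by omega) (by omega) h1
      have := inj _ _ (by omega) (by omega) h2
      omega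
  obtain ⟨q, hqp, hqs, -, hqa, hql, hqh, hqt⟩ :=
    hp_seg2 p halt hstart hpath i j (by omega) (by omega)
  obtain ⟨p1, -, h1s, h1u, h1a, h1l, h1h, h1t⟩ :=
    hp_seg2 p halt hstart hpath k i (by omega) (by omega)
  obtain ⟨p2, -, h2s, h2u, h2a, h2l, h2h, h2t⟩ :=
    hp_seg2 p halt hstart hpath j l (by omega) (by omega)
  have hqh' : ∀ e ∈ q.edges.head?, e ∉ M := fun e he h => by have := (hqh e he).1 h; omega
  have hqt' : ∀ e ∈ q.edges.getLast?, e ∉ M := fun e he h => by have := (hqt e he).1 h; omega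
  have h1h' : ∀ e ∈ p1.edges.head?, e ∈ M := fun e he => (h1h e he).2 (by omega)
  have h1t' : ∀ e ∈ p1.edges.getLast?, e ∈ M := fun e he => (h1t e he).2 (by omega)
  have h2h' : ∀ e ∈ p2.edges.head?, e ∈ M := fun e he => (h2h e he).2 (by omega)
  have h2t' : ∀ e ∈ p2.edges.getLast?, e ∈ M := fun e he => (h2t e he).2 (by omega)
  have hne : ∀ {x y : V} (w : G.Walk x y), 0 < w.length → w.edges ≠ [] := by
    intro x y w hw h0
    have := w.length_edges; rw [h0] at this; simp at this; omega
  obtain ⟨hsC, C1, hC1, hC1m, hC1s, hC1c, hC1d, hC1w⟩ := hp_skip red hC q hqp (by omega)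
    (fun e he => hPC (by simpa using hqs e he)) hqh' hqt' hskip hsM (fun h => hsP (hqs _ h))
  have hw0 : wSum red M C1 - wSum red M C ≠ 0 := by
    intro h0
    apply hnobiskip
    have h00 : wSum red M C1 + wSum red M ∅ - wSum red M C = 0 := by simpa [wSum] using h0
    refine ⟨s(p.getVert i, p.getVert j), s(p.getVert i, p.getVert j), C1, ∅,
      ⟨hskip, hsC, hC1, hC1m, hC1s, Or.inl rfl, ?_, by simpa using hC1c, ?_⟩, h00, ?_⟩
    · rw [Set.disjoint_right]; rintro x ⟨e, he, _⟩; simp at he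
    · rw [h00]; simp
    · intro e he
      have := hC1d (by simpa using he)
      simp at this ⊢
      exact hqs e this
  rw [hC1w] at hw0
  have hnd : (p1.support ++ p2.support).Nodup := by
    rw [h1u, h2u, List.nodup_append']
    have hnp := hpath.support_nodup
    refine ⟨?_, ?_, ?_⟩
    · exact (hnp.sublist (List.drop_sublist _ _)).sublist (List.take_sublist _ _)
    · exact (hnp.sublist (List.drop_sublist _ _)).sublist (List.take_sublist _ _)
    · intro x hx1 hx2
      obtain ⟨m, hm, hmx⟩ := List.getElem_of_mem hx1
      obtain ⟨n, hn, hnx⟩ := List.getElem_of_mem hx2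
      simp only [List.getElem_take, List.getElem_drop] at hmx hnx
      have := (hnp.getElem_inj_iff).1 (hmx.trans hnx.symm)
      simp at hm hn
      omega
  obtain ⟨hN, hcyc⟩ := hp_big p1 p2 hskip hback.symm
    (fun h => by have := inj _ _ (by omega) (by omega) h; omega)
    (fun h => by have := inj _ _ (by omega) (by omega) h; omega)
    hnd h1a h2a h1h' h1t' h2h' h2t' hsM hbM
  set E := s(p.getVert l, p.getVert k) :: (p1.edges ++ s(p.getVert i, p.getVert j) :: p2.edges)
    with hE
  have hwE : wSum red M E.toFinset = wt red M s(p.getVert l, p.getVert k) +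
      ((p1.edges.map (wt red M)).sum + (wt red M s(p.getVert i, p.getVert j) +
        (p2.edges.map (wt red M)).sum)) := by
    rw [hp_wsum _ _ hN, hE]; simp
  have hsub : E.toFinset \ {s(p.getVert l, p.getVert k), s(p.getVert i, p.getVert j)} ⊆ C := by
    intro e he
    simp [hE] at he
    apply hPC
    have := h1s e
    have := h2s e
    simp
    tauto
  have hee : s(p.getVert l, p.getVert k) ≠ s(p.getVert i, p.getVert j) := by
    intro h
    rw [hE, h] at hN
    simp at hN
  have hon2 : ∀ m n, m ≤ p.length → n ≤ p.length → ∀ a : V, a ∈ s(p.getVert m, p.getVert n) →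
      ∃ f ∈ p.edges, a ∈ f := by
    intro m n hm hn a ha
    rw [Sym2.mem_iff] at ha
    rcases ha with rfl | rfl
    · exact hon m hm
    · exact hon n hn
  constructor
  · intro hblue
    rw [hp_blue red M (fun e he => hblue e (hqs e he))] at hw0
    have hsr : red s(p.getVert i, p.getVert j) = true := by
      by_contra h
      simp [wt, h] at hw0
    have hws : wt red M s(p.getVert i, p.getVert j) = 1 := by simp [wt, hsr, hsM]
    rw [hp_blue red M (fun e he => hblue e (h1s e he)),
      hp_blue red M (fun e he => hblue e (h2s e he)), hws] at hwE
    have hwb : wt red M s(p.getVert l, p.getVert k) = 0 ∨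
        wt red M s(p.getVert l, p.getVert k) = 1 := by
      by_cases h : red s(p.getVert l, p.getVert k) = true <;> simp [wt, h, hbM]
    refine ⟨_, _, E.toFinset, hback.symm, hskip, hee, hon2 _ _ (by omega) (by omega),
      hon2 _ _ (by omega) (by omega), Or.inr hsr, hcyc, by simp [hE], by simp [hE], hsub, ?_, ?_, ?_⟩
    · rcases hwb with h | h <;> rw [hwE, h] <;> norm_num
    · rcases hwb with h | h <;> rw [hwE, h] <;> norm_num
    · rw [redCount, wSum, Finset.card_filter]
      push_cast
      apply Finset.sum_congr rfl
      intro e he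
      have hb1 := fun h => hblue e (h1s e h)
      have hb2 := fun h => hblue e (h2s e h)
      simp only [hE, List.mem_toFinset, List.mem_cons, List.mem_append] at he
      rcases he with rfl | he | rfl | he
      · simp [wt, hbM]
      · simp [wt, hb1 he]
      · simp [wt, hsM]
      · simp [wt, hb2 he]
  · intro hred
    rw [hp_red'' red M _ (hne q (by omega)) (fun e he => hred e (hqs e he)) hqa hqh' hqt'] at hw0
    have hsr : red s(p.getVert i, p.getVert j) = false := by
      by_contra h
      simp at h
      simp [wt, h, hsM] at hw0
    have hws : wt red M s(p.getVert i, p.getVert j) = 0 := by simp [wt, hsr]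
    rw [hp_red' red M _ (hne p1 (by omega)) (fun e he => hred e (h1s e he)) h1a h1h' h1t',
      hp_red' red M _ (hne p2 (by omega)) (fun e he => hred e (h2s e he)) h2a h2h' h2t', hws] at hwE
    have hbc : (blueCount red E.toFinset : ℤ) =
        (if red s(p.getVert l, p.getVert k) = false then 1 else 0) + 1 := by
      rw [blueCount, Finset.card_filter]
      push_cast
      rw [List.sum_toFinset _ hN, hE]
      have z1 : (p1.edges.map (fun e => if red e = false then (1:ℤ) else 0)).sum = 0 := by
        apply List.sum_eq_zero
        intro x hx
        obtain ⟨e, he, rfl⟩ := List.mem_map.1 hx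
        simp [hred e (h1s e he)]
      have z2 : (p2.edges.map (fun e => if red e = false then (1:ℤ) else 0)).sum = 0 := by
        apply List.sum_eq_zero
        intro x hx
        obtain ⟨e, he, rfl⟩ := List.mem_map.1 hx
        simp [hred e (h2s e he)]
      rw [List.map_cons, List.map_append, List.map_cons, List.sum_cons, List.sum_append,
        List.sum_cons, z1, z2, hsr]
      simp
    have hwb : wSum red M E.toFinset = 
        -((if red s(p.getVert l, p.getVert k) = false then 1 else 0) + 1) := by
      rw [hwE]
      by_cases h : red s(p.getVert l, p.getVert k) = true <;> simp [wt, h, hbM]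
    refine ⟨_, _, E.toFinset, hback.symm, hskip, hee, hon2 _ _ (by omega) (by omega),
      hon2 _ _ (by omega) (by omega), Or.inr hsr, hcyc, by simp [hE], by simp [hE], hsub, ?_, ?_, ?_⟩
    · rw [hwb]; split_ifs <;> norm_num
    · rw [hwb]; split_ifs <;> norm_num
    · rw [hwb, hbc]; split_ifs <;> norm_num
end

section
/- Let G be a graph with edges colored red or blue and independence number α = α(G), let k be a nonnegative integer such that G has a perfect matching with exactly k red edges, and let M and M' be perfect matchings of G with r(M) ≤ k ≤ r(M'). Then there exist perfect matchings M1 and M2 of G with r(M1) ≤ k ≤ r(M2), r(M1) ≡ r(M) (mod 2), r(M2) ≡ r(M') (mod 2), and r(M2) − r(M1) ≤ 16·4^α. -/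
open Finset

/-- The independence number `α(G)`: the maximum size of a set of pairwise non-adjacent
vertices. -/
noncomputable def indepNum {V : Type*} (G : SimpleGraph V) : ℕ :=
  sSup {n | ∃ s : Finset V, s.card = n ∧ (s : Set V).Pairwise fun u v => ¬ G.Adj u v}

namespace CPM

lemma ramsey {ι : Type*} [DecidableEq ι] (A B : ι → ι → Prop)
    (hA : ∀ i j, A i j → A j i) (hB : ∀ i j, B i j → B j i) :
    ∀ (N a b : ℕ), a + b = N → ∀ S : Finset ι, 2 ^ N ≤ S.card →
      (∀ i ∈ S, ∀ j ∈ S, i ≠ j → A i j ∨ B i j) →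
      (∃ T ⊆ S, T.card = a + 1 ∧ ∀ i ∈ T, ∀ j ∈ T, i ≠ j → A i j) ∨
      (∃ T ⊆ S, T.card = b + 1 ∧ ∀ i ∈ T, ∀ j ∈ T, i ≠ j → B i j) := by
  classical
  intro N
  induction N with
  | zero =>
    intro a b hab S hS h
    obtain ⟨rfl, rfl⟩ : a = 0 ∧ b = 0 := by omega
    obtain ⟨v, hv⟩ : S.Nonempty := Finset.card_pos.mp (by simpa using hS)
    left
    refine ⟨{v}, by simpa using hv, by simp, ?_⟩
    intro i hi j hj hij
    simp at hi hj
    exact absurd (hi.trans hj.symm) hij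
  | succ N ih =>
    intro a b hab S hS h
    obtain ⟨v, hv⟩ : S.Nonempty := Finset.card_pos.mp (lt_of_lt_of_le (by positivity) hS)
    have hone : ∀ i ∈ ({v} : Finset ι), ∀ j ∈ ({v} : Finset ι), i = j := by
      intro i hi j hj
      simp at hi hj
      exact hi.trans hj.symm
    rcases Nat.eq_zero_or_pos a with rfl | ha
    · left
      exact ⟨{v}, by simpa using hv, by simp, fun i hi j hj hij => absurd (hone i hi j hj) hij⟩
    rcases Nat.eq_zero_or_pos b with rfl | hb
    · right
      exact ⟨{v}, by simpa using hv, by simp, fun i hi j hj hij => absurd (hone i hi j hj) hij⟩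
    set SA := (S.erase v).filter (fun j => A v j) with hSA
    set SB := (S.erase v).filter (fun j => ¬ A v j) with hSB
    have hc : SA.card + SB.card = S.card - 1 := by
      rw [hSA, hSB, Finset.card_filter_add_card_filter_not, Finset.card_erase_of_mem hv]
    have hAS : SA ⊆ S := fun x hx => by simp [hSA] at hx; exact hx.1.2
    have hBS : SB ⊆ S := fun x hx => by simp [hSB] at hx; exact hx.1.2
    have hp : 2 ^ (N+1) = 2 * 2 ^ N := by ring
    have : 2 ^ N ≤ SA.card ∨ 2 ^ N ≤ SB.card := by
      by_contra hcon
      push Not at hcon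
      omega
    rcases this with hbig | hbig
    · rcases ih (a-1) b (by omega) SA hbig (fun i hi j hj => h i (hAS hi) j (hAS hj)) with
        ⟨T, hT, hcard, hpair⟩ | ⟨T, hT, hcard, hpair⟩
      · left
        have hvT : v ∉ T := fun hh => by have := hT hh; simp [hSA] at this
        refine ⟨insert v T, ?_, by rw [Finset.card_insert_of_notMem hvT]; omega, ?_⟩
        · intro x hx
          rcases Finset.mem_insert.mp hx with rfl | hx
          · exact hv
          · exact hAS (hT hx)
        · intro i hi j hj hij
          have key : ∀ x ∈ T, A v x := fun x hx => by
            have := hT hx; simp [hSA] at this; exact this.2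
          rcases Finset.mem_insert.mp hi with hi1 | hi1 <;>
            rcases Finset.mem_insert.mp hj with hj1 | hj1
          · exact absurd (hi1.trans hj1.symm) hij
          · rw [hi1]; exact key _ hj1
          · rw [hj1]; exact hA _ _ (key _ hi1)
          · exact hpair _ hi1 _ hj1 hij
      · right
        exact ⟨T, hT.trans hAS, hcard, hpair⟩
    · rcases ih a (b-1) (by omega) SB hbig (fun i hi j hj => h i (hBS hi) j (hBS hj)) with
        ⟨T, hT, hcard, hpair⟩ | ⟨T, hT, hcard, hpair⟩
      · left
        exact ⟨T, hT.trans hBS, hcard, hpair⟩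
      · right
        have hvT : v ∉ T := fun hh => by have := hT hh; simp [hSB] at this
        refine ⟨insert v T, ?_, by rw [Finset.card_insert_of_notMem hvT]; omega, ?_⟩
        · intro x hx
          rcases Finset.mem_insert.mp hx with rfl | hx
          · exact hv
          · exact hBS (hT hx)
        · intro i hi j hj hij
          have key : ∀ x ∈ T, B v x := fun x hx => by
            have h2 := hT hx
            simp [hSB] at h2
            rcases h v hv x h2.1.2 (fun e => h2.1.1 e.symm) with h3 | h3
            · exact absurd h3 h2.2
            · exact h3
          rcases Finset.mem_insert.mp hi with hi1 | hi1 <;>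
            rcases Finset.mem_insert.mp hj with hj1 | hj1
          · exact absurd (hi1.trans hj1.symm) hij
          · rw [hi1]; exact key _ hj1
          · rw [hj1]; exact hB _ _ (key _ hi1)
          · exact hpair _ hi1 _ hj1 hij

/-- weight of the interval path -/
def pw (μ ν : ℕ → ℤ) (a b : ℕ) : ℤ := ∑ i ∈ Finset.Ico a b, ν i - ∑ i ∈ Finset.Ico a (b+1), μ i

lemma intervals (μ ν : ℕ → ℤ) (hμ : ∀ i, 0 ≤ μ i ∧ μ i ≤ 1) (hν : ∀ i, 0 ≤ ν i ∧ ν i ≤ 1)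
    (L : ℕ) : ∀ (K s : ℕ), s ≤ L → 2 * (K : ℤ) ≤ ∑ i ∈ Finset.Ico s L, (ν i - μ i) →
    ∃ S : Finset (ℕ × ℕ), S.card = K ∧
      (∀ q ∈ S, s ≤ q.1 ∧ q.1 ≤ q.2 ∧ q.2 < L ∧ pw μ ν q.1 q.2 = 1) ∧
      (∀ q ∈ S, ∀ q' ∈ S, q ≠ q' → q.2 < q'.1 ∨ q'.2 < q.1) := by
  intro K
  induction K with
  | zero => intro s _ _; exact ⟨∅, by simp⟩
  | succ K ih =>
    intro s hs hsum
    have hsL : s < L := by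
      rcases hs.lt_or_eq with h | h
      · exact h
      · subst h; simp at hsum; omega
    have hex : ∃ b, s ≤ b ∧ b < L ∧ 1 ≤ pw μ ν s b := by
      refine ⟨L - 1, by omega, by omega, ?_⟩
      obtain ⟨l, rfl⟩ : ∃ l, L = l + 1 := ⟨L - 1, by omega⟩
      have h1 := hν l
      simp only [Nat.add_sub_cancel, pw]
      rw [Finset.sum_sub_distrib, Finset.sum_Ico_succ_top (by omega) ν] at hsum
      push_cast at hsum
      linarith
    classical
    set b := Nat.find hex with hb
    obtain ⟨hsb, hbL, hb1⟩ := Nat.find_spec hex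
    rw [← hb] at hsb hbL hb1
    have hbs : s < b := by
      rcases hsb.lt_or_eq with h | h
      · exact h
      · rw [← h] at hb1
        have := hμ s
        simp [pw] at hb1
        omega
    have hpb : pw μ ν s b = 1 := by
      have hm := Nat.find_min hex (m := b - 1) (by omega)
      have hlt : pw μ ν s (b-1) < 1 := by
        by_contra hcon
        exact hm ⟨by omega, by omega, by omega⟩
      obtain ⟨l, hl⟩ : ∃ l, b = l + 1 := ⟨b - 1, by omega⟩
      rw [hl] at hlt hb1 ⊢
      simp only [Nat.add_sub_cancel, pw] at hlt hb1 ⊢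
      rw [Finset.sum_Ico_succ_top (by omega) ν, Finset.sum_Ico_succ_top (by omega) μ] at hb1 ⊢
      have h1 := hν l
      have h2 := hμ (l+1)
      linarith
    have hrest : 2 * (K:ℤ) ≤ ∑ i ∈ Finset.Ico (b+1) L, (ν i - μ i) := by
      rw [← Finset.sum_Ico_consecutive _ (show s ≤ b+1 by omega) (show b+1 ≤ L by omega),
        Finset.sum_sub_distrib (s := Finset.Ico s (b+1)),
        Finset.sum_Ico_succ_top (by omega) ν] at hsum
      simp only [pw] at hpb
      have h1 := hν b
      push_cast at hsum
      linarith
    obtain ⟨S, hc, hS, hd⟩ := ih (b+1) (by omega) hrest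
    have hnot : (s, b) ∉ S := fun h => by have := (hS _ h).1; simp at this; omega
    refine ⟨insert (s,b) S, by rw [Finset.card_insert_of_notMem hnot, hc], ?_, ?_⟩
    · intro q hq
      rcases Finset.mem_insert.mp hq with rfl | hq
      · exact ⟨le_rfl, hsb, hbL, hpb⟩
      · obtain ⟨h1, h2, h3, h4⟩ := hS q hq
        exact ⟨by omega, h2, h3, h4⟩
    · intro q hq q' hq' hne
      rcases Finset.mem_insert.mp hq with rfl | hq <;>
        rcases Finset.mem_insert.mp hq' with rfl | hq'
      · exact absurd rfl hne
      · left; have := (hS q' hq').1; simp; omega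
      · right; have := (hS q hq).1; simp; omega
      · exact hd q hq q' hq' hne

def IsInv {V : Type*} (G : SimpleGraph V) (f : V → V) : Prop :=
  ∀ v, f (f v) = v ∧ G.Adj v (f v)

def Move {V : Type*} (G : SimpleGraph V) (m : V → V) (U : Finset V) (g : V → V) : Prop :=
  ∀ u ∈ U, m u ∈ U ∧ g u ∈ U ∧ g (g u) = u ∧ G.Adj u (g u)

def delta {V : Type*} (c : V → V → ℤ) (m : V → V) (U : Finset V) (g : V → V) : ℤ :=
  ∑ u ∈ U, (c u (g u) - c u (m u))

def app {V : Type*} [DecidableEq V] (m : V → V) (U : Finset V) (g : V → V) : V → V :=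
  fun u => if u ∈ U then g u else m u

lemma app_inv {V : Type*} [DecidableEq V] {G : SimpleGraph V} {m : V → V} {U : Finset V}
    {g : V → V} (hm : IsInv G m) (h : Move G m U g) : IsInv G (app m U g) := by
  intro v
  by_cases hv : v ∈ U
  · obtain ⟨h1, h2, h3, h4⟩ := h v hv
    simp [app, hv, h2, h3, h4]
  · have : m v ∉ U := fun hh => hv (by have := (h _ hh).1; rwa [(hm v).1] at this)
    simp [app, hv, this, hm v]

lemma app_sum {V : Type*} [Fintype V] [DecidableEq V] (c : V → V → ℤ) (m : V → V) (U : Finset V)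
    (g : V → V) : ∑ v, c v (app m U g v) = ∑ v, c v (m v) + delta c m U g := by
  rw [← sub_eq_iff_eq_add', ← Finset.sum_sub_distrib, delta,
    ← Finset.sum_subset (Finset.subset_univ U)]
  · apply Finset.sum_congr rfl
    intro u hu
    simp [app, hu]
  · intro u _ hu
    simp [app, hu]

lemma iter_ne {V : Type*} {G : SimpleGraph V} {m n : V → V} (hm : IsInv G m) (hn : IsInv G n) :
    ∀ (k : ℕ) (v : V), (fun x => n (m x))^[k] v ≠ m v := by
  intro k
  induction k using Nat.twoStepInduction with
  | zero => intro v; exact (hm v).2.ne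
  | one => intro v; exact (hn (m v)).2.ne'
  | more k ih _ =>
    intro v h
    rw [Function.iterate_succ_apply', Function.iterate_succ_apply] at h
    apply ih (n (m v))
    have h2 := congrArg n h
    simp only [(hn _).1] at h2
    have h3 := congrArg m h2
    rwa [(hm _).1] at h3

/-- Abstract alternating cycle through `v`. -/
structure Cyc {V : Type*} (G : SimpleGraph V) (m n : V → V) (v : ℕ → V) (L : ℕ) : Prop where
  pos : 0 < L
  inj : ∀ i < L, ∀ j < L, v i = v j → i = j
  ne : ∀ i j, m (v i) ≠ v j
  step : ∀ i, n (m (v i)) = v (i+1)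
  per : v L = v 0

lemma exists_cyc {V : Type*} [Fintype V] {G : SimpleGraph V} {m n : V → V} (hm : IsInv G m)
    (hn : IsInv G n) (x : V) : ∃ v L, Cyc G m n v L ∧ v 0 = x := by
  set p : V → V := fun x => n (m x) with hp
  have hinj : Function.Injective p := by
    intro a b h
    have h2 := congrArg n h
    simp only [hp, (hn _).1] at h2
    have h3 := congrArg m h2
    rwa [(hm _).1, (hm _).1] at h3
  have hper : x ∈ Function.periodicPts p := hinj.mem_periodicPts x
  refine ⟨fun i => p^[i] x, Function.minimalPeriod p x, ⟨?_, ?_, ?_, ?_, ?_⟩, rfl⟩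
  · exact Function.minimalPeriod_pos_of_mem_periodicPts hper
  · intro i hi j hj h
    exact Function.iterate_injOn_Iio_minimalPeriod (f := p) (x := x) hi hj h
  · intro i j h
    change m (p^[i] x) = p^[j] x at h
    rcases le_total i j with hij | hij
    · obtain ⟨d, rfl⟩ := Nat.exists_eq_add_of_le' hij
      rw [Function.iterate_add_apply] at h
      exact iter_ne hm hn d _ h.symm
    · obtain ⟨d, rfl⟩ := Nat.exists_eq_add_of_le' hij
      rw [Function.iterate_add_apply] at h
      have h2 := congrArg m h
      rw [(hm _).1] at h2
      exact iter_ne hm hn d _ h2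
  · intro i
    simp only [Function.iterate_succ_apply']
    rfl
  · simp

def block {V : Type*} [DecidableEq V] (m : V → V) (v : ℕ → V) (I : Finset ℕ) : Finset V :=
  I.image v ∪ I.image (fun i => m (v i))

lemma mem_block {V : Type*} [DecidableEq V] {m : V → V} {v : ℕ → V} {I : Finset ℕ} {u : V} :
    u ∈ block m v I ↔ ∃ i ∈ I, u = v i ∨ u = m (v i) := by
  simp only [block, Finset.mem_union, Finset.mem_image]
  constructor
  · rintro (⟨i, hi, rfl⟩ | ⟨i, hi, rfl⟩)
    · exact ⟨i, hi, Or.inl rfl⟩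
    · exact ⟨i, hi, Or.inr rfl⟩
  · rintro ⟨i, hi, rfl | rfl⟩
    · exact Or.inl ⟨i, hi, rfl⟩
    · exact Or.inr ⟨i, hi, rfl⟩

lemma m_inj {V : Type*} {G : SimpleGraph V} {m : V → V} (hm : IsInv G m) {a b : V}
    (h : m a = m b) : a = b := by
  rw [← (hm a).1, h, (hm b).1]

lemma block_disj {V : Type*} [DecidableEq V] {G : SimpleGraph V} {m n : V → V} (hm : IsInv G m)
    {v : ℕ → V} {L : ℕ} (C : Cyc G m n v L) {I J : Finset ℕ} (hI : ∀ i ∈ I, i < L)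
    (hJ : ∀ i ∈ J, i < L) (h : Disjoint I J) : Disjoint (block m v I) (block m v J) := by
  rw [Finset.disjoint_left] at h ⊢
  intro u hu hu'
  obtain ⟨i, hi, hiu⟩ := mem_block.mp hu
  obtain ⟨j, hj, hju⟩ := mem_block.mp hu'
  have key : i = j → False := fun e => h hi (e ▸ hj)
  rcases hiu with rfl | rfl <;> rcases hju with e | e
  · exact key (C.inj i (hI i hi) j (hJ j hj) e)
  · exact C.ne _ _ e.symm
  · exact C.ne _ _ e
  · exact key (C.inj i (hI i hi) j (hJ j hj) (m_inj hm e))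

lemma block_sum {V : Type*} [DecidableEq V] {G : SimpleGraph V} {m n : V → V} (hm : IsInv G m)
    {v : ℕ → V} {L : ℕ} (C : Cyc G m n v L) {I : Finset ℕ} (hI : ∀ i ∈ I, i < L)
    (F : V → ℤ) : ∑ u ∈ block m v I, F u = ∑ i ∈ I, (F (v i) + F (m (v i))) := by
  rw [block, Finset.sum_union, Finset.sum_image, Finset.sum_image, Finset.sum_add_distrib]
  · intro i hi j hj h
    exact C.inj i (hI i hi) j (hI j hj) (m_inj hm h)
  · intro i hi j hj h
    exact C.inj i (hI i hi) j (hI j hj) h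
  · rw [Finset.disjoint_left]
    intro u hu hu'
    obtain ⟨i, hi, rfl⟩ := Finset.mem_image.mp hu
    obtain ⟨j, hj, e⟩ := Finset.mem_image.mp hu'
    exact C.ne _ _ e

lemma n_succ {V : Type*} {G : SimpleGraph V} {m n : V → V} (hn : IsInv G n)
    {v : ℕ → V} {L : ℕ} (C : Cyc G m n v L) (i : ℕ) : n (v (i+1)) = m (v i) := by
  rw [← C.step, (hn _).1]

lemma cyc_move {V : Type*} [DecidableEq V] {G : SimpleGraph V} {m n : V → V} (hm : IsInv G m)
    (hn : IsInv G n) {v : ℕ → V} {L : ℕ} (C : Cyc G m n v L) :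
    Move G m (block m v (Finset.range L)) n := by
  intro u hu
  obtain ⟨i, hi, h⟩ := mem_block.mp hu
  rw [Finset.mem_range] at hi
  refine ⟨?_, ?_, (hn u).1, (hn u).2⟩
  · refine mem_block.mpr ⟨i, by simpa using hi, ?_⟩
    rcases h with rfl | rfl
    · right; rfl
    · left; exact (hm _).1
  · rcases h with rfl | rfl
    · rcases i with _ | i
      · refine mem_block.mpr ⟨L - 1, by simpa using C.pos, ?_⟩
        right
        have := n_succ hn C (L - 1)
        rwa [Nat.sub_add_cancel C.pos, C.per] at this
      · exact mem_block.mpr ⟨i, by simp; omega, Or.inr (n_succ hn C i)⟩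
    · rw [C.step]
      by_cases h : i + 1 = L
      · rw [h, C.per]
        exact mem_block.mpr ⟨0, by simpa using C.pos, Or.inl rfl⟩
      · exact mem_block.mpr ⟨i+1, by simp; omega, Or.inl rfl⟩

lemma cyc_delta {V : Type*} [DecidableEq V] {G : SimpleGraph V} {m n : V → V} (hm : IsInv G m)
    (hn : IsInv G n) {v : ℕ → V} {L : ℕ} (C : Cyc G m n v L) (c : V → V → ℤ)
    (hc : ∀ a b, c a b = c b a) :
    delta c m (block m v (Finset.range L)) n
      = 2 * ∑ i ∈ Finset.Ico 0 L, (c (m (v i)) (v (i+1)) - c (v i) (m (v i))) := by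
  rw [delta, block_sum hm C (by simp)]
  have h1 : ∑ i ∈ Finset.range L, c (v i) (n (v i))
      = ∑ i ∈ Finset.range L, c (m (v i)) (v (i+1)) := by
    have e1 := Finset.sum_range_succ (fun i => c (v i) (n (v i))) L
    have e2 := Finset.sum_range_succ' (fun i => c (v i) (n (v i))) L
    rw [C.per] at e1
    have e3 : ∑ i ∈ Finset.range L, c (v (i+1)) (n (v (i+1)))
      = ∑ i ∈ Finset.range L, c (m (v i)) (v (i+1)) :=
      Finset.sum_congr rfl fun i _ => by rw [n_succ hn C, hc]
    linarith
  simp only [C.step, (hm _).1, Finset.sum_add_distrib, Finset.sum_sub_distrib, h1,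
    Nat.Ico_zero_eq_range]
  have h2 : ∑ i ∈ Finset.range L, c (m (v i)) (v i) = ∑ i ∈ Finset.range L, c (v i) (m (v i)) :=
    Finset.sum_congr rfl fun i _ => hc _ _
  rw [h2]; ring

lemma seg_eval (F H ν : ℕ → ℤ) (a b : ℕ) (hab : a ≤ b) (hF : ∀ i, a ≤ i → i < b → F (i+1) = ν i)
    (hH : ∀ i, a ≤ i → i < b → H i = ν i) :
    ∑ i ∈ Finset.Ico a (b+1), (F i + H i) = 2 * ∑ i ∈ Finset.Ico a b, ν i + F a + H b := by
  rw [Finset.sum_add_distrib, Finset.sum_Ico_succ_top hab H,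
    Finset.sum_eq_sum_Ico_succ_bot (by omega) F, ← Finset.sum_Ico_add' F a b 1]
  have h1 : ∑ i ∈ Finset.Ico a b, F (i+1) = ∑ i ∈ Finset.Ico a b, ν i :=
    Finset.sum_congr rfl fun i hi => by
      rw [Finset.mem_Ico] at hi; exact hF i hi.1 hi.2
  have h2 : ∑ i ∈ Finset.Ico a b, H i = ∑ i ∈ Finset.Ico a b, ν i :=
    Finset.sum_congr rfl fun i hi => by
      rw [Finset.mem_Ico] at hi; exact hH i hi.1 hi.2
  rw [h1, h2]; ring

lemma pair_move {V : Type*} [DecidableEq V] {G : SimpleGraph V} {m n : V → V} (hm : IsInv G m)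
    (hn : IsInv G n) {v : ℕ → V} {L : ℕ} (C : Cyc G m n v L) (c : V → V → ℤ)
    (hc : ∀ a b, c a b = c b a) (hc01 : ∀ a b, 0 ≤ c a b ∧ c a b ≤ 1)
    (a b a' b' : ℕ) (hab : a ≤ b) (hba : b < a') (hab' : a' ≤ b') (hbL : b' < L)
    (hx : G.Adj (v a) (v a')) (hy : G.Adj (m (v b)) (m (v b')))
    (hw : pw (fun i => c (v i) (m (v i))) (fun i => c (m (v i)) (v (i+1))) a b = 1)
    (hw' : pw (fun i => c (v i) (m (v i))) (fun i => c (m (v i)) (v (i+1))) a' b' = 1) :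
    ∃ g, Move G m (block m v (Finset.Ico a (b+1) ∪ Finset.Ico a' (b'+1))) g ∧
      0 < delta c m (block m v (Finset.Ico a (b+1) ∪ Finset.Ico a' (b'+1))) g ∧
      delta c m (block m v (Finset.Ico a (b+1) ∪ Finset.Ico a' (b'+1))) g ≤ 8 := by
  set g : V → V := fun u => if u = v a then v a' else if u = v a' then v a else
    if u = m (v b) then m (v b') else if u = m (v b') then m (v b) else n u with hg
  have vne : ∀ i j, v i ≠ m (v j) := fun i j h => C.ne j i h.symm
  have vinj : ∀ i < L, ∀ j < L, v i = v j ↔ i = j := fun i hi j hj =>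
    ⟨C.inj i hi j hj, fun h => by rw [h]⟩
  have minj : ∀ i < L, ∀ j < L, m (v i) = m (v j) ↔ i = j := fun i hi j hj =>
    ⟨fun h => C.inj i hi j hj (m_inj hm h), fun h => by rw [h]⟩
  have g1 : g (v a) = v a' := by simp [hg]
  have g2 : g (v a') = v a := by
    have : a' ≠ a := by omega
    simp [hg, vinj a' (by omega) a (by omega), this]
  have g3 : g (m (v b)) = m (v b') := by simp [hg, C.ne]
  have g4 : g (m (v b')) = m (v b) := by
    have : b' ≠ b := by omega
    simp [hg, C.ne, minj b' (by omega) b (by omega), this]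
  have g5 : ∀ i, i + 1 < L → i + 1 ≠ a → i + 1 ≠ a' → g (v (i+1)) = m (v i) := by
    intro i hi h1 h2
    simp [hg, vinj (i+1) hi a (by omega), vinj (i+1) hi a' (by omega), h1, h2, vne, n_succ hn C]
  have g6 : ∀ i, i < L → i ≠ b → i ≠ b' → g (m (v i)) = v (i+1) := by
    intro i hi h1 h2
    simp [hg, minj i hi b (by omega), minj i hi b' (by omega), h1, h2, C.ne, C.step]
  have hI : ∀ i, i ∈ Finset.Ico a (b+1) ∪ Finset.Ico a' (b'+1) ↔
      (a ≤ i ∧ i ≤ b) ∨ (a' ≤ i ∧ i ≤ b') := by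
    intro i; simp only [Finset.mem_union, Finset.mem_Ico]; omega
  refine ⟨g, ?_, ?_⟩
  · intro u hu
    obtain ⟨i, hi, h⟩ := mem_block.mp hu
    refine ⟨?_, ?_⟩
    · refine mem_block.mpr ⟨i, hi, ?_⟩
      rcases h with rfl | rfl
      · right; rfl
      · left; exact (hm _).1
    rw [hI] at hi
    rcases h with rfl | rfl
    · by_cases h1 : i = a
      · subst h1
        rw [g1, g2]
        exact ⟨mem_block.mpr ⟨a', (hI _).mpr (by omega), Or.inl rfl⟩, rfl, hx⟩
      by_cases h2 : i = a'
      · subst h2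
        rw [g2, g1]
        exact ⟨mem_block.mpr ⟨a, (hI _).mpr (by omega), Or.inl rfl⟩, rfl, hx.symm⟩
      obtain ⟨j, rfl⟩ : ∃ j, i = j + 1 := ⟨i - 1, by omega⟩
      rw [g5 j (by omega) h1 h2, g6 j (by omega) (by omega) (by omega)]
      refine ⟨mem_block.mpr ⟨j, (hI _).mpr (by omega), Or.inr rfl⟩, rfl, ?_⟩
      rw [← n_succ hn C]
      exact (hn _).2
    · by_cases h1 : i = b
      · subst h1
        rw [g3, g4]
        exact ⟨mem_block.mpr ⟨b', (hI _).mpr (by omega), Or.inr rfl⟩, rfl, hy⟩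
      by_cases h2 : i = b'
      · subst h2
        rw [g4, g3]
        exact ⟨mem_block.mpr ⟨b, (hI _).mpr (by omega), Or.inr rfl⟩, rfl, hy.symm⟩
      rw [g6 i (by omega) h1 h2, g5 i (by omega) (by omega) (by omega)]
      refine ⟨mem_block.mpr ⟨i+1, (hI _).mpr (by omega), Or.inl rfl⟩, rfl, ?_⟩
      rw [← C.step]
      exact (hn _).2
  · have hdis : Disjoint (Finset.Ico a (b+1)) (Finset.Ico a' (b'+1)) := by
      rw [Finset.disjoint_left]; intro i h1 h2
      rw [Finset.mem_Ico] at h1 h2; omega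
    have hmm : ∀ a b, ∑ i ∈ Finset.Ico a (b+1), (c (v i) (m (v i)) + c (m (v i)) (v i))
      = 2 * ∑ i ∈ Finset.Ico a (b+1), c (v i) (m (v i)) := by
      intro a b
      rw [Finset.mul_sum]
      refine Finset.sum_congr rfl fun i _ => ?_
      rw [hc (m (v i))]; ring
    have key : delta c m (block m v (Finset.Ico a (b+1) ∪ Finset.Ico a' (b'+1))) g
        = 4 + 2 * c (v a) (v a') + 2 * c (m (v b)) (m (v b')) := by
      rw [delta, Finset.sum_sub_distrib,
        block_sum hm C (fun i hi => by have := (hI i).mp hi; omega) (fun u => c u (g u)),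
        block_sum hm C (fun i hi => by have := (hI i).mp hi; omega) (fun u => c u (m u)),
        Finset.sum_union hdis, Finset.sum_union hdis]
      simp only [(hm _).1]
      rw [hmm, hmm,
        seg_eval (fun i => c (v i) (g (v i))) (fun i => c (m (v i)) (g (m (v i))))
          (fun i => c (m (v i)) (v (i+1))) a b hab
          (fun i h1 h2 => by
            rw [g5 i (by omega) (by omega) (by omega), hc])
          (fun i h1 h2 => by rw [g6 i (by omega) (by omega) (by omega)]),
        seg_eval (fun i => c (v i) (g (v i))) (fun i => c (m (v i)) (g (m (v i))))
          (fun i => c (m (v i)) (v (i+1))) a' b' hab'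
          (fun i h1 h2 => by
            rw [g5 i (by omega) (by omega) (by omega), hc])
          (fun i h1 h2 => by rw [g6 i (by omega) (by omega) (by omega)]),
        g1, g2, g3, g4, hc (v a') (v a), hc (m (v b')) (m (v b))]
      simp only [pw] at hw hw'
      linarith
    have h1 := hc01 (v a) (v a')
    have h2 := hc01 (m (v b)) (m (v b'))
    rw [key]
    constructor <;> linarith

lemma find_pair {V : Type*} [DecidableEq V] {G : SimpleGraph V} (α : ℕ)
    (hα : ∀ s : Finset V, (∀ u ∈ s, ∀ w ∈ s, u ≠ w → ¬ G.Adj u w) → s.card ≤ α)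
    {ι : Type*} [DecidableEq ι] (S : Finset ι) (hS : 4 ^ α ≤ S.card) (x y : ι → V)
    (hx : ∀ q ∈ S, ∀ q' ∈ S, x q = x q' → q = q') (hy : ∀ q ∈ S, ∀ q' ∈ S, y q = y q' → q = q') :
    ∃ q ∈ S, ∃ q' ∈ S, q ≠ q' ∧ G.Adj (x q) (x q') ∧ G.Adj (y q) (y q') := by
  by_contra hcon
  push Not at hcon
  have h4 : 2 ^ (α + α) ≤ S.card := by
    refine le_trans (le_of_eq ?_) hS
    rw [← two_mul, pow_mul]; norm_num
  have aux : ∀ z : ι → V, (∀ q ∈ S, ∀ q' ∈ S, z q = z q' → q = q') →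
      ¬ ∃ T ⊆ S, T.card = α + 1 ∧ ∀ i ∈ T, ∀ j ∈ T, i ≠ j → ¬ G.Adj (z i) (z j) := by
    rintro z hz ⟨T, hT, hc, hp⟩
    have h := hα (T.image z) (by
      intro u hu w hw huw
      obtain ⟨i, hi, rfl⟩ := Finset.mem_image.mp hu
      obtain ⟨j, hj, rfl⟩ := Finset.mem_image.mp hw
      exact hp i hi j hj (fun e => huw (by rw [e])))
    rw [Finset.card_image_of_injOn (fun i hi j hj e => hz i (hT hi) j (hT hj) e)] at h
    omega
  rcases ramsey (fun q q' => ¬ G.Adj (x q) (x q')) (fun q q' => ¬ G.Adj (y q) (y q'))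
    (fun i j h h' => h h'.symm) (fun i j h h' => h h'.symm) (α + α) α α rfl S h4
    (fun i hi j hj hij => by
      by_cases h : G.Adj (x i) (x j)
      · right; exact hcon i hi j hj hij h
      · left; exact h) with h | h
  · exact aux x hx h
  · exact aux y hy h

lemma find_move {V : Type*} [DecidableEq V] {G : SimpleGraph V} {m n : V → V} (hm : IsInv G m)
    (hn : IsInv G n) {v : ℕ → V} {L : ℕ} (C : Cyc G m n v L) (c : V → V → ℤ)
    (hc : ∀ a b, c a b = c b a) (hc01 : ∀ a b, 0 ≤ c a b ∧ c a b ≤ 1) (α : ℕ)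
    (hα : ∀ s : Finset V, (∀ u ∈ s, ∀ w ∈ s, u ≠ w → ¬ G.Adj u w) → s.card ≤ α)
    (S : Finset (ℕ × ℕ)) (hS : 4 ^ α ≤ S.card)
    (h1 : ∀ q ∈ S, q.1 ≤ q.2 ∧ q.2 < L ∧
      pw (fun i => c (v i) (m (v i))) (fun i => c (m (v i)) (v (i+1))) q.1 q.2 = 1)
    (h2 : ∀ q ∈ S, ∀ q' ∈ S, q ≠ q' → q.2 < q'.1 ∨ q'.2 < q.1) :
    ∃ q ∈ S, ∃ q' ∈ S, q ≠ q' ∧ ∃ g,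
      Move G m (block m v (Finset.Ico q.1 (q.2+1) ∪ Finset.Ico q'.1 (q'.2+1))) g ∧
      0 < delta c m (block m v (Finset.Ico q.1 (q.2+1) ∪ Finset.Ico q'.1 (q'.2+1))) g ∧
      delta c m (block m v (Finset.Ico q.1 (q.2+1) ∪ Finset.Ico q'.1 (q'.2+1))) g ≤ 8 := by
  obtain ⟨q, hq, q', hq', hne, hx, hy⟩ := find_pair α hα S hS (fun q => v q.1)
    (fun q => m (v q.2))
    (by
      intro q hq q' hq' e
      by_contra hne
      obtain ⟨a1, a2, _⟩ := h1 q hq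
      obtain ⟨b1, b2, _⟩ := h1 q' hq'
      have := C.inj _ (by omega) _ (by omega) e
      have := h2 q hq q' hq' hne
      omega)
    (by
      intro q hq q' hq' e
      by_contra hne
      obtain ⟨a1, a2, _⟩ := h1 q hq
      obtain ⟨b1, b2, _⟩ := h1 q' hq'
      have := C.inj _ (by omega) _ (by omega) (m_inj hm e)
      have := h2 q hq q' hq' hne
      omega)
  obtain ⟨a1, a2, a3⟩ := h1 q hq
  obtain ⟨b1, b2, b3⟩ := h1 q' hq'
  refine ⟨q, hq, q', hq', hne, ?_⟩
  rcases h2 q hq q' hq' hne with h | h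
  · exact pair_move hm hn C c hc hc01 _ _ _ _ a1 h b1 b2 hx hy a3 b3
  · rw [Finset.union_comm]
    exact pair_move hm hn C c hc hc01 _ _ _ _ b1 h a1 a2 hx.symm hy.symm b3 a3

/-- two disjoint moves with small positive gain -/
def TwoMoves {V : Type*} (G : SimpleGraph V) (c : V → V → ℤ) (m : V → V) (B : ℤ) : Prop :=
  ∃ U1 g1 U2 g2, Disjoint U1 U2 ∧ Move G m U1 g1 ∧ Move G m U2 g2 ∧
    0 < delta c m U1 g1 ∧ 2 * delta c m U1 g1 ≤ B ∧ 0 < delta c m U2 g2 ∧ 2 * delta c m U2 g2 ≤ B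

lemma big_cycle {V : Type*} [DecidableEq V] {G : SimpleGraph V} {m n : V → V} (hm : IsInv G m)
    (hn : IsInv G n) {v : ℕ → V} {L : ℕ} (C : Cyc G m n v L) (c : V → V → ℤ)
    (hc : ∀ a b, c a b = c b a) (hc01 : ∀ a b, 0 ≤ c a b ∧ c a b ≤ 1) (α : ℕ) (hα1 : 1 ≤ α)
    (hα : ∀ s : Finset V, (∀ u ∈ s, ∀ w ∈ s, u ≠ w → ¬ G.Adj u w) → s.card ≤ α)
    (B : ℤ) (hB : 16 * 4 ^ α < B)
    (hbig : B < 2 * delta c m (block m v (Finset.range L)) n) : TwoMoves G c m B := by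
  rw [cyc_delta hm hn C c hc] at hbig
  have h4 : (4 : ℕ) ≤ 4 ^ α := by
    calc 4 = 4 ^ 1 := rfl
      _ ≤ 4 ^ α := Nat.pow_le_pow_right (by norm_num) hα1
  have h4' : (4 : ℤ) ≤ 4 ^ α := by exact_mod_cast h4
  obtain ⟨S, hcard, h1, h2⟩ := intervals (fun i => c (v i) (m (v i)))
    (fun i => c (m (v i)) (v (i+1))) (fun i => hc01 _ _) (fun i => hc01 _ _) L (4 ^ α + 2) 0
    (by omega) (by push_cast; linarith)
  obtain ⟨q, hq, q', hq', hne, g, hmv, hp, hle⟩ := find_move hm hn C c hc hc01 α hα S (by omega)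
    (fun q hq => (h1 q hq).2) h2
  set S' := (S.erase q).erase q' with hS'
  have hcS' : S'.card = 4 ^ α := by
    rw [hS', Finset.card_erase_of_mem (Finset.mem_erase.mpr ⟨hne.symm, hq'⟩),
      Finset.card_erase_of_mem hq]
    omega
  have hsub : ∀ r ∈ S', r ∈ S ∧ r ≠ q ∧ r ≠ q' := by
    intro r hr
    simp only [hS', Finset.mem_erase] at hr
    exact ⟨hr.2.2, hr.2.1, hr.1⟩
  obtain ⟨r, hr, r', hr', hne', g', hmv', hp', hle'⟩ := find_move hm hn C c hc hc01 α hα S'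
    (by omega)
    (fun q hq => (h1 q (hsub q hq).1).2) (fun x hx y hy => h2 x (hsub x hx).1 y (hsub y hy).1)
  refine ⟨_, g, _, g', ?_, hmv, hmv', hp, by linarith, hp', by linarith⟩
  obtain ⟨hrS, hrq, hrq'⟩ := hsub r hr
  obtain ⟨hrS', hr'q, hr'q'⟩ := hsub r' hr'
  have e1 := h1 q hq
  have e2 := h1 q' hq'
  have e3 := h1 r hrS
  have e4 := h1 r' hrS'
  have f1 := h2 r hrS q hq hrq
  have f2 := h2 r hrS q' hq' hrq'
  have f3 := h2 r' hrS' q hq hr'q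
  have f4 := h2 r' hrS' q' hq' hr'q'
  apply block_disj hm C
  · intro i hi
    simp only [Finset.mem_union, Finset.mem_Ico] at hi
    omega
  · intro i hi
    simp only [Finset.mem_union, Finset.mem_Ico] at hi
    omega
  · rw [Finset.disjoint_left]
    intro i hi hi'
    simp only [Finset.mem_union, Finset.mem_Ico] at hi hi'
    omega

/-- in a closed set with positive gain there is a cycle with positive gain -/
lemma pos_cycle {V : Type*} [Fintype V] [DecidableEq V] {G : SimpleGraph V} {m n : V → V}
    (hm : IsInv G m) (hn : IsInv G n) (c : V → V → ℤ) :
    ∀ (N : ℕ) (U : Finset V), U.card ≤ N → (∀ u ∈ U, m u ∈ U ∧ n u ∈ U) →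
      0 < delta c m U n → ∃ v L, Cyc G m n v L ∧ block m v (Finset.range L) ⊆ U ∧
        0 < delta c m (block m v (Finset.range L)) n := by
  intro N
  induction N with
  | zero =>
    intro U hU _ hp
    have : U = ∅ := Finset.card_eq_zero.mp (by omega)
    subst this
    simp [delta] at hp
  | succ N ih =>
    intro U hU hcl hp
    have hne : U.Nonempty := by
      by_contra h
      rw [Finset.not_nonempty_iff_eq_empty] at h
      subst h
      simp [delta] at hp
    obtain ⟨x, hx⟩ := hne
    obtain ⟨v, L, C, hv⟩ := exists_cyc hm hn x
    have hvU : ∀ i, v i ∈ U := by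
      intro i
      induction i with
      | zero => rwa [hv]
      | succ i ihi =>
        rw [← C.step]
        exact (hcl _ (hcl _ ihi).1).2
    have hsub : block m v (Finset.range L) ⊆ U := by
      intro u hu
      obtain ⟨i, _, rfl | rfl⟩ := mem_block.mp hu
      · exact hvU i
      · exact (hcl _ (hvU i)).1
    by_cases hpos : 0 < delta c m (block m v (Finset.range L)) n
    · exact ⟨v, L, C, hsub, hpos⟩
    have hmv := cyc_move hm hn C
    have hxb : x ∈ block m v (Finset.range L) :=
      mem_block.mpr ⟨0, by simpa using C.pos, Or.inl hv.symm⟩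
    have hsd : delta c m (U \ block m v (Finset.range L)) n
        + delta c m (block m v (Finset.range L)) n = delta c m U n := Finset.sum_sdiff hsub
    obtain ⟨v', L', C', hs', hp'⟩ := ih (U \ block m v (Finset.range L))
      (by
        have : (U \ block m v (Finset.range L)).card < U.card :=
          Finset.card_lt_card (Finset.ssubset_iff_subset_ne.mpr ⟨Finset.sdiff_subset, fun e => by
            rw [← e] at hx
            exact (Finset.mem_sdiff.mp hx).2 hxb⟩)
        omega)
      (by
        intro u hu
        rw [Finset.mem_sdiff] at hu
        refine ⟨Finset.mem_sdiff.mpr ⟨(hcl u hu.1).1, fun h => hu.2 ?_⟩,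
          Finset.mem_sdiff.mpr ⟨(hcl u hu.1).2, fun h => hu.2 ?_⟩⟩
        · have := (hmv _ h).1; rwa [(hm _).1] at this
        · have := (hmv _ h).2.1; rwa [(hn _).1] at this)
      (by linarith)
    exact ⟨v', L', C', hs'.trans Finset.sdiff_subset, hp'⟩

lemma core {V : Type*} [Fintype V] [DecidableEq V] {G : SimpleGraph V} {m n : V → V}
    (hm : IsInv G m) (hn : IsInv G n) (c : V → V → ℤ)
    (hc : ∀ a b, c a b = c b a) (hc01 : ∀ a b, 0 ≤ c a b ∧ c a b ≤ 1) (α : ℕ) (hα1 : 1 ≤ α)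
    (hα : ∀ s : Finset V, (∀ u ∈ s, ∀ w ∈ s, u ≠ w → ¬ G.Adj u w) → s.card ≤ α)
    (B : ℤ) (hB : 16 * 4 ^ α < B) (hBe : B = ∑ v, c v (n v) - ∑ v, c v (m v)) :
    TwoMoves G c m B := by
  have hB0 : 0 < B := lt_trans (by positivity) hB
  by_cases hbig : ∃ v L, Cyc G m n v L ∧ B < 2 * delta c m (block m v (Finset.range L)) n
  · obtain ⟨v, L, C, h⟩ := hbig
    exact big_cycle hm hn C c hc hc01 α hα1 hα B hB h
  push Not at hbig
  have hall : delta c m Finset.univ n = B := by rw [hBe, delta, Finset.sum_sub_distrib]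
  obtain ⟨v, L, C, _, hp⟩ := pos_cycle hm hn c _ Finset.univ le_rfl (by simp) (by linarith)
  have hmv := cyc_move hm hn C
  have hle := hbig v L C
  have hsd : delta c m (Finset.univ \ block m v (Finset.range L)) n
        + delta c m (block m v (Finset.range L)) n = delta c m Finset.univ n :=
    Finset.sum_sdiff (Finset.subset_univ _)
  obtain ⟨v', L', C', hs', hp'⟩ := pos_cycle hm hn c _
    (Finset.univ \ block m v (Finset.range L)) le_rfl
    (by
      intro u hu
      rw [Finset.mem_sdiff] at hu
      refine ⟨Finset.mem_sdiff.mpr ⟨Finset.mem_univ _, fun h => hu.2 ?_⟩,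
        Finset.mem_sdiff.mpr ⟨Finset.mem_univ _, fun h => hu.2 ?_⟩⟩
      · have := (hmv _ h).1; rwa [(hm _).1] at this
      · have := (hmv _ h).2.1; rwa [(hn _).1] at this)
    (by linarith)
  refine ⟨_, n, _, n, ?_, hmv, cyc_move hm hn C', hp, hle, hp', hbig _ _ C'⟩
  rw [Finset.disjoint_left]
  intro u hu hu'
  exact (Finset.mem_sdiff.mp (hs' hu')).2 hu

/-- colour indicator -/
def col {V : Type*} (red : Sym2 V → Bool) (a b : V) : ℤ := if red s(a, b) = true then 1 else 0

lemma pm_inv {V : Type*} [DecidableEq V] {G : SimpleGraph V} {M : Finset (Sym2 V)}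
    (h : IsPM G M) : ∃ m : V → V, IsInv G m ∧ ∀ v, s(v, m v) ∈ M := by
  have : ∀ v, ∃ w, s(v, w) ∈ M := by
    intro v
    obtain ⟨e, ⟨he, hv⟩, _⟩ := h.2 v
    obtain ⟨w, rfl⟩ := Sym2.mem_iff_exists.mp hv
    exact ⟨w, he⟩
  choose m hm using this
  refine ⟨m, ?_, hm⟩
  intro v
  refine ⟨?_, by simpa using h.1 (hm v)⟩
  have h1 := (h.2 (m v)).unique ⟨hm (m v), by simp⟩ ⟨hm v, by simp⟩
  rw [Sym2.eq_swap] at h1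
  rcases Sym2.eq_iff.mp h1 with h2 | h2
  · exact h2.1
  · exact h2.1.trans h2.2

lemma pm_count {V : Type*} [Fintype V] [DecidableEq V] {G : SimpleGraph V} {M : Finset (Sym2 V)}
    (h : IsPM G M) (m : V → V) (hm : ∀ v, s(v, m v) ∈ M) (red : Sym2 V → Bool) :
    ∑ v, col red v (m v) = 2 * (redCount red M : ℤ) := by
  have h1 : ∑ v, col red v (m v) = ∑ e ∈ M, ∑ v with s(v, m v) = e, col red v (m v) :=
    (Finset.sum_fiberwise_of_maps_to (fun v _ => hm v) _).symm
  rw [h1, redCount, Finset.card_filter, Nat.cast_sum, Finset.mul_sum]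
  refine Finset.sum_congr rfl fun e he => ?_
  have hfil : (Finset.univ.filter fun v => s(v, m v) = e) = Finset.univ.filter fun v => v ∈ e := by
    ext v
    simp only [Finset.mem_filter, Finset.mem_univ, true_and]
    constructor
    · rintro rfl; simp
    · intro hv; exact (h.2 v).unique ⟨hm v, by simp⟩ ⟨he, hv⟩
  have hcard : (Finset.univ.filter fun v => v ∈ e).card = 2 := by
    have hadj := h.1 he
    induction e using Sym2.ind with
    | _ a b =>
      have : a ≠ b := (show G.Adj a b by simpa using hadj).ne
      rw [show (Finset.univ.filter fun v => v ∈ s(a, b)) = {a, b} by ext; simp]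
      exact Finset.card_pair this
  rw [Finset.sum_congr rfl (g := fun _ => if red e = true then (1:ℤ) else 0), hfil,
    Finset.sum_const, hcard]
  · push_cast; simp
  · intro v hv
    rw [Finset.mem_filter] at hv
    rw [col, hv.2]

lemma inv_pm {V : Type*} [Fintype V] [DecidableEq V] {G : SimpleGraph V} {m : V → V}
    (hm : IsInv G m) : ∃ M, IsPM G M ∧ ∀ v, s(v, m v) ∈ M := by
  refine ⟨Finset.univ.image fun v => s(v, m v), ⟨?_, ?_⟩,
    fun v => Finset.mem_image_of_mem _ (Finset.mem_univ v)⟩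
  · intro e he
    simp only [Finset.coe_image, Set.mem_image] at he
    obtain ⟨v, _, rfl⟩ := he
    simpa using (hm v).2
  · intro v
    refine ⟨s(v, m v), ⟨Finset.mem_image_of_mem _ (Finset.mem_univ v), by simp⟩, ?_⟩
    rintro e ⟨he, hv⟩
    obtain ⟨w, _, rfl⟩ := Finset.mem_image.mp he
    rcases Sym2.mem_iff.mp hv with rfl | rfl
    · rfl
    · rw [(hm w).1, Sym2.eq_swap]

lemma indep_bound {V : Type*} [Fintype V] (G : SimpleGraph V) (s : Finset V)
    (h : ∀ u ∈ s, ∀ w ∈ s, u ≠ w → ¬ G.Adj u w) : s.card ≤ indepNum G := by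
  apply le_csSup
  · refine ⟨Fintype.card V, ?_⟩
    rintro n ⟨t, rfl, _⟩
    exact Finset.card_le_univ t
  · exact ⟨s, rfl, fun u hu w hw => h u hu w hw⟩

lemma one_side {V : Type*} [Fintype V] [DecidableEq V] (G : SimpleGraph V) (red : Sym2 V → Bool)
    (N M : Finset (Sym2 V)) (hN : IsPM G N) (hM : IsPM G M)
    (hle : redCount red M ≤ redCount red N) :
    ∃ M1, IsPM G M1 ∧ redCount red M1 ≤ redCount red N ∧
      redCount red M1 % 2 = redCount red M % 2 ∧
      (redCount red N : ℤ) - redCount red M1 ≤ 8 * 4 ^ indepNum G := by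
  classical
  obtain ⟨M1, hM1, hmax⟩ := Finset.exists_max_image
    (Finset.univ.filter fun F : Finset (Sym2 V) => IsPM G F ∧ redCount red F ≤ redCount red N ∧
      redCount red F % 2 = redCount red M % 2) (fun F => redCount red F)
    ⟨M, by simp [hM, hle]⟩
  simp only [Finset.mem_filter, Finset.mem_univ, true_and] at hM1 hmax
  obtain ⟨hpm, hle1, hpar⟩ := hM1
  refine ⟨M1, hpm, hle1, hpar, ?_⟩
  by_contra hcon
  push Not at hcon
  obtain ⟨m, hm, hmM⟩ := pm_inv hpm
  obtain ⟨n, hn, hnN⟩ := pm_inv hN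
  have cm := pm_count hpm m hmM red
  have cn := pm_count hN n hnN red
  have hα1 : 1 ≤ indepNum G := by
    have hne : Nonempty V := by
      by_contra hemp
      rw [not_nonempty_iff] at hemp
      simp at cm cn
      have : (0:ℤ) < 8 * 4 ^ indepNum G := by positivity
      rw [cm, cn] at hcon
      simp at hcon
      linarith
    obtain ⟨x⟩ := hne
    have := indep_bound G {x} (by simp)
    simpa using this
  obtain ⟨U1, g1, U2, g2, hd, mv1, mv2, p1, b1, p2, b2⟩ := core hm hn (col red)
    (fun a b => by rw [col, col, Sym2.eq_swap])
    (fun a b => by unfold col; split_ifs <;> simp) (indepNum G) hα1 (indep_bound G)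
    (2 * (redCount red N : ℤ) - 2 * redCount red M1) (by linarith) (by rw [cm, cn])
  have fin : ∀ f, IsInv G f → ∃ r : ℕ, ∑ v, col red v (f v) = 2 * (r : ℤ) ∧
      (r ≤ redCount red N → r % 2 = redCount red M1 % 2 → r ≤ redCount red M1) := by
    intro f hf
    obtain ⟨F, hF, hfF⟩ := inv_pm hf
    exact ⟨redCount red F, pm_count hF f hfF red,
      fun h1 h2 => hmax F ⟨hF, h1, h2.trans hpar⟩⟩
  have i1 := app_inv hm mv1
  have i2 := app_inv hm mv2
  have eqU : ∀ u ∈ U2, app m U1 g1 u = m u := by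
    intro u hu
    have : u ∉ U1 := fun h => Finset.disjoint_left.mp hd h hu
    simp [app, this]
  have mv12 : Move G (app m U1 g1) U2 g2 := by
    intro u hu
    rw [eqU u hu]
    exact mv2 u hu
  have d12 : delta (col red) (app m U1 g1) U2 g2 = delta (col red) m U2 g2 :=
    Finset.sum_congr rfl fun u hu => by rw [eqU u hu]
  have i12 := app_inv i1 mv12
  obtain ⟨r1, e1, f1⟩ := fin _ i1
  obtain ⟨r2, e2, f2⟩ := fin _ i2
  obtain ⟨r3, e3, f3⟩ := fin _ i12
  rw [app_sum] at e3
  rw [d12, e1] at e3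
  rw [app_sum, cm] at e1 e2
  omega

end CPM

/-- Given a "Yes" instance of Exact Matching (a PM with exactly `k` red edges exists) and
two PMs `M`, `M'` with `r(M) ≤ k ≤ r(M')`, there are PMs `M1`, `M2` with
`r(M1) ≤ k ≤ r(M2)`, `r(M1) ≡ r(M) (mod 2)`, `r(M2) ≡ r(M') (mod 2)` and
`r(M2) − r(M1) ≤ 16·4^α`. -/
theorem close_parity_matchings
    {V : Type*} [Fintype V] [DecidableEq V] (G : SimpleGraph V) (red : Sym2 V → Bool)
    (k : ℕ) (hyes : ∃ M : Finset (Sym2 V), IsPM G M ∧ redCount red M = k)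
    (M M' : Finset (Sym2 V)) (hM : IsPM G M) (hM' : IsPM G M')
    (hle : redCount red M ≤ k) (hge : k ≤ redCount red M') :
    ∃ M1 M2 : Finset (Sym2 V), IsPM G M1 ∧ IsPM G M2 ∧
      redCount red M1 ≤ k ∧ k ≤ redCount red M2 ∧
      redCount red M1 ≡ redCount red M [MOD 2] ∧
      redCount red M2 ≡ redCount red M' [MOD 2] ∧
      (redCount red M2 : ℤ) - (redCount red M1 : ℤ) ≤ 16 * 4 ^ indepNum G := by
  obtain ⟨N, hN, rfl⟩ := hyes
  obtain ⟨M1, h1, h2, h3, h4⟩ := CPM.one_side G red N M hN hM hle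
  have hb : ∀ F, IsPM G F →
      redCount red F + redCount (fun e => !red e) F = F.card ∧ 2 * F.card = Fintype.card V := by
    intro F hF
    constructor
    · simp only [redCount]
      rw [← Finset.card_filter_add_card_filter_not (s := F) (fun e => red e = true)]
      simp
    · obtain ⟨f, _, hf⟩ := CPM.pm_inv hF
      have := CPM.pm_count hF f hf (fun _ => true)
      simp [CPM.col, redCount] at this
      exact_mod_cast this.symm
  have eN := hb N hN
  have eM := hb M' hM'
  obtain ⟨M2, k1, k2, k3, k4⟩ := CPM.one_side G (fun e => !red e) N M' hN hM' (by omega)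
  have e2 := hb M2 k1
  refine ⟨M1, M2, h1, k1, h2, by omega, h3, ?_, ?_⟩
  · unfold Nat.ModEq; omega
  · have : (redCount (fun e => !red e) N : ℤ) - redCount (fun e => !red e) M2
        = redCount red M2 - redCount red N := by omega
    linarith
end
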